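/- arXiv:0710.2495 — 3 statements merged into one kernel-verified Lean document; each statement's English description precedes it below -/
import Mathlib

section
/- Let T1, T2 : A → B(H) be completely positive maps and let α ≥ 0 be such that for every n ≥ 1 and every x in M_n(A), ‖((T1 − T2) applied entrywise)(x)‖ ≤ α · ‖x‖ (i.e., the cb-norm of T1 − T2 is at most α). Then there exists a common dilation (π, V1, K), (π, V2, K) of (T1, T2) with ‖V1 − V2‖ ≤ √α. -/
noncomputable section

universe u v

/-- A linear map between star algebras is *completely positive* if, for every `n`, its
entrywise application to `n × n` matrices maps positive elements (i.e. elements of the form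
`star y * y`) to positive elements. -/
def IsCPMap {A B : Type*} [NonUnitalSemiring A] [StarRing A]
    [NonUnitalSemiring B] [StarRing B] (T : A → B) : Prop :=
  ∀ (n : ℕ) (x : Matrix (Fin n) (Fin n) A),
    (∃ y : Matrix (Fin n) (Fin n) A, x = star y * y) →
      ∃ z : Matrix (Fin n) (Fin n) B, x.map T = star z * z

/-- `ν` is a C*-norm on the star algebra `R`. -/
structure IsCStarNorm {R : Type*} [NonUnitalRing R] [StarRing R] [Module ℂ R]
    (ν : R → ℝ) : Prop where
  add_le : ∀ x y : R, ν (x + y) ≤ ν x + ν y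
  smul_eq : ∀ (c : ℂ) (x : R), ν (c • x) = ‖c‖ * ν x
  eq_zero_iff : ∀ x : R, ν x = 0 ↔ x = 0
  mul_le : ∀ x y : R, ν (x * y) ≤ ν x * ν y
  star_mul_self : ∀ x : R, ν (star x * x) = ν x * ν x

/-- `(π, V, K)` is a Stinespring dilation of `T : A → B(H)`:
`T a = V⋆ ∘ π a ∘ V` for all `a`. -/
def IsStinespring {A : Type*} [CStarAlgebra A]
    {H : Type*} [NormedAddCommGroup H] [InnerProductSpace ℂ H] [CompleteSpace H]
    {K : Type*} [NormedAddCommGroup K] [InnerProductSpace ℂ K] [CompleteSpace K]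
    (T : A →ₗ[ℂ] (H →L[ℂ] H)) (π : A →⋆ₙₐ[ℂ] (K →L[ℂ] K)) (V : H →L[ℂ] K) : Prop :=
  ∀ a : A, T a = (ContinuousLinearMap.adjoint V).comp ((π a).comp V)


section CStarNorm

set_option linter.unusedSectionVars false

variable {R : Type*} [CStarAlgebra R] [PartialOrder R] [StarOrderedRing R]

lemma IsCStarNorm.nonneg' {ν : R → ℝ} (hν : IsCStarNorm ν) (x : R) : 0 ≤ ν x := by
  have h0 : ν 0 = 0 := (hν.eq_zero_iff 0).2 rfl
  have h1 := hν.add_le x (-x)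
  have h2 : ν (-x) = ν x := by
    have := hν.smul_eq (-1) x
    simpa using this
  rw [add_neg_cancel, h0, h2] at h1
  linarith

lemma IsCStarNorm.unitary_le {ν : R → ℝ} (hν : IsCStarNorm ν) (u : R) (hu : star u * u = 1) :
    ν u ≤ 1 := by
  have h1 : ν 1 = ν 1 * ν 1 := by simpa using hν.star_mul_self 1
  have h2 := hν.star_mul_self u
  rw [hu] at h2
  have h3 : ν 1 ≤ 1 := by nlinarith [hν.nonneg' (1 : R)]
  nlinarith [hν.nonneg' u]

lemma IsCStarNorm.le_one {ν : R → ℝ} (hν : IsCStarNorm ν) (h : R) (hh : IsSelfAdjoint h)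
    (hn : ‖h‖ ≤ 1) : ν h ≤ 1 := by
  have hm := hh.self_add_I_smul_cfcSqrt_sub_sq_mem_unitary h hn
  set u := h + Complex.I • CFC.sqrt (1 - h ^ 2) with hu
  have hs : star u = h - Complex.I • CFC.sqrt (1 - h ^ 2) := by
    simp [hu, hh.star_eq, ← sub_eq_add_neg, (CFC.sqrt_nonneg (1 - h ^ 2 : R)).isSelfAdjoint.star_eq]
  have e : h = (2⁻¹ : ℂ) • (u + star u) := by
    rw [hs, hu, add_add_sub_cancel, ← two_smul ℂ h, smul_smul]; norm_num
  have h1 := hν.unitary_le u (Unitary.star_mul_self_of_mem hm)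
  have h2 := hν.unitary_le (star u) (by simpa using Unitary.mul_star_self_of_mem hm)
  rw [e, hν.smul_eq]
  have := hν.add_le u (star u)
  norm_num
  linarith

lemma IsCStarNorm.le_norm {ν : R → ℝ} (hν : IsCStarNorm ν) (h : R) (hh : IsSelfAdjoint h)
    {r : ℝ} (hr : 0 < r) (hn : ‖h‖ ≤ r) : ν h ≤ r := by
  have h1 := hν.le_one (((r⁻¹ : ℝ) : ℂ) • h) (by
      rw [isSelfAdjoint_iff, star_smul, hh.star_eq]; simp) (by
      rw [norm_smul]; simp [abs_of_pos hr]
      rw [inv_mul_le_iff₀ hr]; simpa using hn)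
  rw [hν.smul_eq] at h1
  simp [abs_of_pos hr] at h1
  rw [inv_mul_le_iff₀ hr] at h1
  simpa using h1

lemma IsCStarNorm.le_algebraMap {ν : R → ℝ} (hν : IsCStarNorm ν) (y : R) (hy : IsSelfAdjoint y)
    {r : ℝ} (hr : ν y < r) : y ≤ algebraMap ℝ R r := by
  have hr0 : 0 < r := (hν.nonneg' y).trans_lt hr
  have hk : Continuous (fun t : ℝ => (max t r)⁻¹) :=
    (continuous_id.max continuous_const).inv₀ (fun t => (hr0.trans_le (le_max_right _ _)).ne')
  have hf : Continuous (fun t : ℝ => max (t - r) 0) := by fun_prop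
  set k := cfc (fun t : ℝ => (max t r)⁻¹) y with hkd
  set g := cfc (fun t : ℝ => max (t - r) 0) y with hgd
  have e : g = k * y * g := by
    have : k * y * g = cfc (fun t : ℝ => (max t r)⁻¹ * t * max (t - r) 0) y := by
      rw [cfc_mul (fun t : ℝ => (max t r)⁻¹ * t) (fun t : ℝ => max (t - r) 0) y
        (hk.mul continuous_id).continuousOn hf.continuousOn,
        cfc_mul (fun t : ℝ => (max t r)⁻¹) (fun t : ℝ => t) y hk.continuousOn continuousOn_id,
        cfc_id' ℝ y]
    rw [this, hgd]
    apply cfc_congr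
    intro t _
    dsimp only
    rcases le_total t r with h | h
    · simp [max_eq_right (sub_nonpos.2 h)]
    · rw [max_eq_left h, inv_mul_cancel₀ (hr0.trans_le h).ne', one_mul]
  have hkn : ν k ≤ r⁻¹ := by
    apply hν.le_norm k (cfc_predicate _ _) (by positivity)
    apply norm_cfc_le (by positivity)
    intro t _
    rw [Real.norm_of_nonneg (by positivity)]
    exact inv_anti₀ hr0 (le_max_right _ _)
  have hg0 : ν g = 0 := by
    have h1 : ν g ≤ ν k * ν y * ν g := by
      conv_lhs => rw [e]
      exact (hν.mul_le _ _).trans (mul_le_mul_of_nonneg_right (hν.mul_le _ _) (hν.nonneg' _))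
    by_contra hne
    have hpos : 0 < ν g := lt_of_le_of_ne (hν.nonneg' _) (Ne.symm hne)
    have : ν k * ν y < 1 := by
      calc ν k * ν y ≤ r⁻¹ * ν y := mul_le_mul_of_nonneg_right hkn (hν.nonneg' _)
        _ < r⁻¹ * r := by gcongr
        _ = 1 := inv_mul_cancel₀ hr0.ne'
    nlinarith
  have hg : g = 0 := (hν.eq_zero_iff g).1 hg0
  have hsub : y - algebraMap ℝ R r ≤ g := by
    have : y - algebraMap ℝ R r = cfc (fun t : ℝ => t - r) y := by
      rw [cfc_sub _ _ y (by fun_prop) (by fun_prop), cfc_id' ℝ y, cfc_const _ y]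
    rw [this, hgd]
    exact cfc_mono (fun t _ => le_max_left _ _) (by fun_prop) (by fun_prop)
  rw [hg] at hsub
  exact sub_nonpos.1 hsub

lemma exists_weight (P : R) (hP : 0 ≤ P) : ∃ w h : R, IsSelfAdjoint w ∧ IsSelfAdjoint h ∧
    ‖h‖ ≤ 1 ∧ h = 1 - (w + w) + w * P * w ∧ 1 + h ≤ P := by
  have hP' : IsSelfAdjoint P := hP.isSelfAdjoint
  have hc : Continuous (fun t : ℝ => (max t 1)⁻¹) :=
    (continuous_id.max continuous_const).inv₀
      (fun t => ((zero_lt_one' ℝ).trans_le (le_max_right _ _)).ne')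
  set f : ℝ → ℝ := fun t => (max t 1)⁻¹ with hfd
  set F : ℝ → ℝ := fun t => 1 - (f t + f t) + f t * t * f t with hFd
  have hF : Continuous F := by fun_prop
  have key : ∀ t : ℝ, 0 ≤ t → F t ≤ 1 ∧ -1 ≤ F t ∧ 1 + F t ≤ t := by
    intro t ht
    rcases le_total t 1 with h | h
    · have : f t = 1 := by simp [hfd, max_eq_right h]
      simp only [hFd, this]
      refine ⟨?_, ?_, ?_⟩ <;> linarith
    · have h0 : 0 < t := by linarith
      have : F t = 1 - t⁻¹ := by
        simp only [hFd, hfd, max_eq_left h]; field_simp; ring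
      rw [this]
      have h1 : 0 < t⁻¹ := by positivity
      have h2 : t⁻¹ ≤ 1 := inv_le_one_of_one_le₀ h
      refine ⟨by linarith, by linarith, ?_⟩
      have h3 : t * t⁻¹ = 1 := mul_inv_cancel₀ h0.ne'
      nlinarith [sq_nonneg (t - 1)]
  refine ⟨cfc f P, cfc F P, cfc_predicate _ _, cfc_predicate _ _, ?_, ?_, ?_⟩
  · apply norm_cfc_le zero_le_one
    intro t ht
    have := key t (spectrum_nonneg_of_nonneg hP ht)
    rw [Real.norm_eq_abs, abs_le]
    exact ⟨this.2.1, this.1⟩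
  · rw [hFd, cfc_add P _ _ (by fun_prop) (by fun_prop), cfc_sub _ _ P (by fun_prop) (by fun_prop),
      cfc_add P _ _ (by fun_prop) (by fun_prop), cfc_mul _ _ P (by fun_prop) (by fun_prop),
      cfc_mul _ _ P (by fun_prop) (by fun_prop), cfc_id' ℝ P, cfc_const_one ℝ P]
  · have e : 1 + cfc F P = cfc (fun t => 1 + F t) P := by
      rw [cfc_add P (fun _ => 1) F (by fun_prop) (by fun_prop), cfc_const_one ℝ P]
    rw [e]
    conv_rhs => rw [← cfc_id' ℝ P]
    exact cfc_mono (fun t ht => (key t (spectrum_nonneg_of_nonneg hP ht)).2.2)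
      (by fun_prop) (by fun_prop)

lemma exists_star_mul_of_nonneg {M : R} (h : 0 ≤ M) : ∃ y, M = star y * y :=
  CStarAlgebra.nonneg_iff_eq_star_mul_self.1 h

lemma nonneg_sub {M N : R} (h : M ≤ N) : 0 ≤ N - M := sub_nonneg.2 h

lemma IsCStarNorm.le_smul_one {ν : R → ℝ} (hν : IsCStarNorm ν) (y : R) (hy : IsSelfAdjoint y)
    {r : ℝ} (hr : ν y < r) : y ≤ (r : ℂ) • (1 : R) := by
  have h := hν.le_algebraMap y hy hr
  rwa [Algebra.algebraMap_eq_smul_one, ← Complex.coe_smul] at h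

end CStarNorm

section Kolmogorov

open UniformSpace Completion
open scoped InnerProductSpace

variable {A : Type*} [CStarAlgebra A] {J : Type*}

/-- the sesquilinear form on `J →₀ A` attached to a kernel. -/
def kform (κ : J → J → A →ₗ[ℂ] ℂ) (u v : J →₀ A) : ℂ :=
  u.sum fun i a => v.sum fun j b => κ i j (star a * b)

lemma kform_add_left (κ : J → J → A →ₗ[ℂ] ℂ) (u u' v : J →₀ A) :
    kform κ (u + u') v = kform κ u v + kform κ u' v := by
  classical
  unfold kform
  rw [Finsupp.sum_add_index']
  · intro i; simp
  · intro i a b; simp [add_mul, Finsupp.sum_add]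

lemma kform_add_right (κ : J → J → A →ₗ[ℂ] ℂ) (u v v' : J →₀ A) :
    kform κ u (v + v') = kform κ u v + kform κ u v' := by
  classical
  unfold kform
  rw [← Finsupp.sum_add]
  congr 1; ext i a
  rw [Finsupp.sum_add_index']
  · intro i; simp
  · intro i a b; simp [mul_add]

lemma kform_single (κ : J → J → A →ₗ[ℂ] ℂ) (i j : J) (a b : A) :
    kform κ (Finsupp.single i a) (Finsupp.single j b) = κ i j (star a * b) := by
  simp [kform]

/-- left multiplication on `J →₀ A`. -/
def lmul (c : A) : (J →₀ A) →ₗ[ℂ] (J →₀ A) := Finsupp.mapRange.linearMap (LinearMap.mulLeft ℂ c)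

lemma lmul_single (c a : A) (i : J) :
    lmul c (Finsupp.single i a) = Finsupp.single i (c * a) := by simp [lmul]

lemma kform_lmul (κ : J → J → A →ₗ[ℂ] ℂ) (c : A) (u v : J →₀ A) :
    kform κ (lmul c u) v = kform κ u (lmul (star c) v) := by
  induction u using Finsupp.induction_linear with
  | zero => simp [kform]
  | add f g hf hg => rw [map_add, kform_add_left, kform_add_left, hf, hg]
  | single i a =>
    induction v using Finsupp.induction_linear with
    | zero => simp [kform]
    | add f g hf hg => rw [map_add, kform_add_right, kform_add_right, hf, hg]
    | single j b => rw [lmul_single, lmul_single, kform_single, kform_single, star_mul, mul_assoc]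

lemma kform_smul_left (κ : J → J → A →ₗ[ℂ] ℂ) (c : ℂ) (u v : J →₀ A) :
    kform κ (c • u) v = (starRingEnd ℂ) c * kform κ u v := by
  induction u using Finsupp.induction_linear with
  | zero => simp [kform]
  | add f g hf hg => rw [smul_add, kform_add_left, kform_add_left, hf, hg, mul_add]
  | single i a =>
    induction v using Finsupp.induction_linear with
    | zero => simp [kform]
    | add f g hf hg => rw [kform_add_right, kform_add_right, hf, hg, mul_add]
    | single j b => rw [Finsupp.smul_single, kform_single, kform_single]; simp

lemma kform_conj (κ : J → J → A →ₗ[ℂ] ℂ)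
    (hκ : ∀ i j a, κ j i (star a) = (starRingEnd ℂ) (κ i j a)) (u v : J →₀ A) :
    (starRingEnd ℂ) (kform κ v u) = kform κ u v := by
  induction u using Finsupp.induction_linear with
  | zero => simp [kform]
  | add f g hf hg => rw [kform_add_left, kform_add_right, map_add, hf, hg]
  | single i a =>
    induction v using Finsupp.induction_linear with
    | zero => simp [kform]
    | add f g hf hg => rw [kform_add_left, kform_add_right, map_add, hf, hg]
    | single j b => rw [kform_single, kform_single, ← hκ]; simp

/-- positivity data for a kernel. -/
structure IsPDKernel (κ : J → J → A →ₗ[ℂ] ℂ) : Prop where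
  herm : ∀ i j a, κ j i (star a) = (starRingEnd ℂ) (κ i j a)
  pos : ∀ u : J →₀ A, 0 ≤ (kform κ u u).re

set_option linter.unusedVariables false in
/-- Pre-Hilbert space of a positive definite kernel. -/
def PreK {κ : J → J → A →ₗ[ℂ] ℂ} (hκ : IsPDKernel κ) := J →₀ A

variable {κ : J → J → A →ₗ[ℂ] ℂ} (hκ : IsPDKernel κ)

instance : AddCommGroup (PreK hκ) := inferInstanceAs (AddCommGroup (J →₀ A))
instance : Module ℂ (PreK hκ) := inferInstanceAs (Module ℂ (J →₀ A))

/-- identification. -/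
def toK : (J →₀ A) ≃ₗ[ℂ] PreK hκ := LinearEquiv.refl ℂ _

/-- The pre-inner product. -/
abbrev preKCore : PreInnerProductSpace.Core ℂ (PreK hκ) where
  inner a b := kform κ ((toK hκ).symm a) ((toK hκ).symm b)
  conj_inner_symm a b := kform_conj κ hκ.herm _ _
  re_inner_nonneg a := hκ.pos _
  add_left a b c := by rw [map_add, kform_add_left]
  smul_left a b c := by rw [map_smul, kform_smul_left]

instance : SeminormedAddCommGroup (PreK hκ) :=
  InnerProductSpace.Core.toSeminormedAddCommGroup (c := preKCore hκ)
instance : InnerProductSpace ℂ (PreK hκ) := InnerProductSpace.ofCore (preKCore hκ)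

lemma preK_inner (a b : PreK hκ) :
    ⟪a, b⟫_ℂ = kform κ ((toK hκ).symm a) ((toK hκ).symm b) := rfl

lemma exists_defect (c : A) : ∃ d : A, star d * d = ((‖c‖ ^ 2 : ℝ) : ℂ) • (1 : A) - star c * c := by
  let _ := CStarAlgebra.spectralOrder A
  have _ := CStarAlgebra.spectralOrderedRing A
  have h := CStarAlgebra.star_mul_le_algebraMap_norm_sq (a := c)
  obtain ⟨d, hd⟩ := CStarAlgebra.nonneg_iff_eq_star_mul_self.1 (sub_nonneg.2 h)
  refine ⟨d, ?_⟩
  rw [← hd, Algebra.algebraMap_eq_smul_one, Complex.coe_smul]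

lemma lmul_mul (c d : A) (u : J →₀ A) : lmul (c * d) u = lmul c (lmul d u) := by
  ext i; simp [lmul, mul_assoc]

lemma lmul_smul (m : ℂ) (a : A) (u : J →₀ A) : lmul (m • a) u = m • lmul a u := by
  ext i; simp [lmul]

lemma lmul_add (a b : A) (u : J →₀ A) : lmul (a + b) u = lmul a u + lmul b u := by
  ext i; simp [lmul, add_mul]

lemma lmul_zero (u : J →₀ A) : lmul 0 u = 0 := by
  ext i; simp [lmul]

lemma lmul_bound {κ : J → J → A →ₗ[ℂ] ℂ} (hκ : IsPDKernel κ) (c : A) (u : J →₀ A) :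
    (kform κ (lmul c u) (lmul c u)).re ≤ ‖c‖ ^ 2 * (kform κ u u).re := by
  obtain ⟨d, hd⟩ := exists_defect c
  have h1 : kform κ (lmul c u) (lmul c u) + kform κ (lmul d u) (lmul d u)
      = ((‖c‖ ^ 2 : ℝ) : ℂ) * kform κ u u := by
    have e : ((‖c‖ ^ 2 : ℝ) : ℂ) * kform κ u u = kform κ (((‖c‖ ^ 2 : ℝ) : ℂ) • u) u := by
      rw [kform_smul_left, Complex.conj_ofReal]
    have e2 : ((‖c‖ ^ 2 : ℝ) : ℂ) • u = lmul (star c) (lmul c u) + lmul (star d) (lmul d u) := by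
      rw [← lmul_mul, ← lmul_mul, hd]
      ext i
      simp [lmul, sub_mul, mul_assoc]
    rw [e, e2, kform_add_left, kform_lmul κ (star c), kform_lmul κ (star d), star_star, star_star]
  have h2 := hκ.pos (lmul d u)
  have h3 := congrArg Complex.re h1
  rw [Complex.re_ofReal_mul, Complex.add_re] at h3
  linarith

/-- bounded left multiplication -/
def lmulK (c : A) : PreK hκ →L[ℂ] PreK hκ :=
  ((toK hκ).toLinearMap ∘ₗ lmul c ∘ₗ (toK hκ).symm.toLinearMap).mkContinuous ‖c‖ fun x => by
    rw [← sq_le_sq₀ (by positivity) (by positivity), mul_pow,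
      norm_sq_eq_re_inner (𝕜 := ℂ), norm_sq_eq_re_inner (𝕜 := ℂ) x]
    exact lmul_bound hκ c ((toK hκ).symm x)

lemma lmulK_apply (c : A) (x : PreK hκ) :
    lmulK hκ c x = toK hκ (lmul c ((toK hκ).symm x)) := rfl

lemma clm_completion_ext {E : Type*} [SeminormedAddCommGroup E] [InnerProductSpace ℂ E]
    {f g : Completion E →L[ℂ] Completion E} (h : ∀ x : E, f (x : Completion E) = g x) : f = g :=
  ContinuousLinearMap.ext fun x => Completion.induction_on x
    (isClosed_eq f.continuous g.continuous) h

/-- the representation -/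
def repK : A →⋆ₙₐ[ℂ] (Completion (PreK hκ) →L[ℂ] Completion (PreK hκ)) where
  toFun a := (lmulK hκ a).completion
  map_smul' m a := by
    refine clm_completion_ext fun x => ?_
    · skip
      have : lmulK hκ (m • a) x = m • lmulK hκ a x := by
        simp only [lmulK_apply]; rw [lmul_smul, map_smul]
      simp [this]
  map_zero' := by
    refine clm_completion_ext fun x => ?_
    · skip
      have : lmulK hκ 0 x = 0 := by
        simp only [lmulK_apply]; rw [lmul_zero, map_zero]
      simp [this, Completion.coe_zero]
  map_add' a b := by
    refine clm_completion_ext fun x => ?_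
    · skip
      have : lmulK hκ (a + b) x = lmulK hκ a x + lmulK hκ b x := by
        simp only [lmulK_apply]; rw [lmul_add, map_add]
      simp [this, Completion.coe_add]
  map_mul' a b := by
    refine clm_completion_ext fun x => ?_
    · skip
      have : lmulK hκ (a * b) x = lmulK hκ a (lmulK hκ b x) := by
        simp only [lmulK_apply]; rw [lmul_mul]; simp
      simp [this]
  map_star' a := by
    refine (ContinuousLinearMap.eq_adjoint_iff (lmulK hκ (star a)).completion
      (lmulK hκ a).completion).mpr ?_
    intro x y
    induction x, y using Completion.induction_on₂ with
    | hp => apply isClosed_eq <;> fun_prop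
    | ih x y =>
      simp only [ContinuousLinearMap.completion_apply_coe, Completion.inner_coe]
      simp only [preK_inner, lmulK_apply, LinearEquiv.symm_apply_apply]
      rw [kform_lmul, star_star]

/-- the generating vectors -/
def vecK (i : J) : Completion (PreK hκ) := ((toK hκ (Finsupp.single i 1) : PreK hκ) : Completion _)

lemma vecK_inner_rep (i j : J) (a : A) : ⟪vecK hκ i, repK hκ a (vecK hκ j)⟫_ℂ = κ i j a := by
  change ⟪vecK hκ i, (lmulK hκ a).completion (vecK hκ j)⟫_ℂ = κ i j a
  unfold vecK
  rw [ContinuousLinearMap.completion_apply_coe, Completion.inner_coe, preK_inner, lmulK_apply]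
  simp [lmul_single, kform_single]

lemma vecK_inner (i j : J) : ⟪vecK hκ i, vecK hκ j⟫_ℂ = κ i j 1 := by
  unfold vecK
  rw [Completion.inner_coe, preK_inner]
  simp [kform_single]

end Kolmogorov

section MatrixPart

open scoped InnerProductSpace

variable {A : Type*} [CStarAlgebra A] [PartialOrder A] [StarOrderedRing A]
  {H : Type*} [NormedAddCommGroup H] [InnerProductSpace ℂ H] [CompleteSpace H]

set_option linter.unusedSectionVars false

/-- The functional on matrices induced by `T` and a family of vectors. -/
def phi (T : A →ₗ[ℂ] (H →L[ℂ] H)) {n : ℕ} (ξ : Fin n → H) :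
    CStarMatrix (Fin n) (Fin n) A →+ ℝ where
  toFun M := ∑ i, ∑ j, (⟪ξ i, T (M i j) (ξ j)⟫_ℂ).re
  map_zero' := by simp
  map_add' M N := by simp [inner_add_right, Finset.sum_add_distrib]

lemma phi_apply (T : A →ₗ[ℂ] (H →L[ℂ] H)) {n : ℕ} (ξ : Fin n → H)
    (M : CStarMatrix (Fin n) (Fin n) A) :
    phi T ξ M = ∑ i, ∑ j, (⟪ξ i, T (M i j) (ξ j)⟫_ℂ).re := rfl

lemma phi_smul (T : A →ₗ[ℂ] (H →L[ℂ] H)) {n : ℕ} (ξ : Fin n → H) (r : ℝ)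
    (M : CStarMatrix (Fin n) (Fin n) A) :
    phi T ξ ((r : ℂ) • M) = r * phi T ξ M := by
  simp only [phi_apply, Finset.mul_sum]
  refine Finset.sum_congr rfl fun i _ => Finset.sum_congr rfl fun j _ => ?_
  simp [inner_smul_right]

lemma form_nonneg {n : ℕ} (z : Matrix (Fin n) (Fin n) (H →L[ℂ] H)) (ξ : Fin n → H) :
    0 ≤ ∑ i, ∑ j, (⟪ξ i, (star z * z) i j (ξ j)⟫_ℂ).re := by
  have e : ∑ i, ∑ j, (⟪ξ i, (star z * z) i j (ξ j)⟫_ℂ).re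
      = ∑ k, (⟪∑ i, z k i (ξ i), ∑ j, z k j (ξ j)⟫_ℂ).re := by
    have h1 : ∀ i j, (⟪ξ i, (star z * z) i j (ξ j)⟫_ℂ).re
        = ∑ k, (⟪z k i (ξ i), z k j (ξ j)⟫_ℂ).re := by
      intro i j
      rw [Matrix.mul_apply, ContinuousLinearMap.sum_apply, inner_sum, Complex.re_sum]
      refine Finset.sum_congr rfl fun k _ => ?_
      rw [Matrix.star_apply, ContinuousLinearMap.star_eq_adjoint]
      change (⟪ξ i, (ContinuousLinearMap.adjoint (z k i)) (z k j (ξ j))⟫_ℂ).re = _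
      rw [ContinuousLinearMap.adjoint_inner_right]
    simp only [h1, sum_inner, inner_sum, Complex.re_sum]
    calc _ = ∑ i, ∑ k, ∑ j, (⟪z k i (ξ i), z k j (ξ j)⟫_ℂ).re := by
          exact Finset.sum_congr rfl fun i _ => Finset.sum_comm
      _ = ∑ k, ∑ i, ∑ j, (⟪z k i (ξ i), z k j (ξ j)⟫_ℂ).re := Finset.sum_comm
      _ = _ := Finset.sum_congr rfl fun i _ => Finset.sum_comm
  rw [e]
  exact Finset.sum_nonneg fun k _ => inner_self_nonneg (𝕜 := ℂ)

lemma phi_nonneg {T : A →ₗ[ℂ] (H →L[ℂ] H)} (hT : IsCPMap T) {n : ℕ} (ξ : Fin n → H)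
    {M : CStarMatrix (Fin n) (Fin n) A} (hM : 0 ≤ M) : 0 ≤ phi T ξ M := by
  obtain ⟨y, hy⟩ := exists_star_mul_of_nonneg hM
  obtain ⟨z, hz⟩ := hT n (CStarMatrix.ofMatrix.symm M) ⟨CStarMatrix.ofMatrix.symm y, hy⟩
  have h := form_nonneg z ξ
  rw [← hz] at h
  exact h

lemma cp_star {T : A →ₗ[ℂ] (H →L[ℂ] H)} (hT : IsCPMap T) (a : A) : T (star a) = star (T a) := by
  obtain ⟨z, hz⟩ := hT 2 (star !![1, a; 0, 0] * !![1, a; 0, 0]) ⟨_, rfl⟩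
  have h1 : star (star z * z) = star z * z := by simp
  rw [← hz] at h1
  have h2 := congrFun (congrFun h1 1) 0
  rw [Matrix.star_apply] at h2
  simp [Matrix.mul_apply, Matrix.star_apply, Fin.sum_univ_two] at h2
  exact h2.symm

variable {T₁ T₂ : A →ₗ[ℂ] (H →L[ℂ] H)}

lemma diff_bound (hT₁ : IsCPMap T₁) (hT₂ : IsCPMap T₂)
    (νA : ∀ n : ℕ, Matrix (Fin n) (Fin n) A → ℝ)
    (νB : ∀ n : ℕ, Matrix (Fin n) (Fin n) (H →L[ℂ] H) → ℝ)
    (hνA : ∀ n, IsCStarNorm (νA n)) (hνB : ∀ n, IsCStarNorm (νB n))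
    (α : ℝ) (hα : 0 ≤ α)
    (hcb : ∀ (n : ℕ) (x : Matrix (Fin n) (Fin n) A),
      νB n (x.map (fun a => T₁ a - T₂ a)) ≤ α * νA n x)
    {n : ℕ} (ξ : Fin n → H) (h : CStarMatrix (Fin n) (Fin n) A) (hh : IsSelfAdjoint h)
    (hn : ‖h‖ ≤ 1) : -(α * ∑ i, ‖ξ i‖ ^ 2) ≤ phi T₁ ξ h - phi T₂ ξ h := by
  have hA : IsCStarNorm (fun M : CStarMatrix (Fin n) (Fin n) A =>
      νA n (CStarMatrix.ofMatrix.symm M)) :=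
    ⟨(hνA n).1, (hνA n).2, (hνA n).3, (hνA n).4, (hνA n).5⟩
  have hB : IsCStarNorm (fun M : CStarMatrix (Fin n) (Fin n) (H →L[ℂ] H) =>
      νB n (CStarMatrix.ofMatrix.symm M)) :=
    ⟨(hνB n).1, (hνB n).2, (hνB n).3, (hνB n).4, (hνB n).5⟩
  have h1 := hA.le_one h hh hn
  set y : CStarMatrix (Fin n) (Fin n) (H →L[ℂ] H) :=
    CStarMatrix.ofMatrix (Matrix.map (CStarMatrix.ofMatrix.symm h) (fun a => T₁ a - T₂ a)) with hy
  have hys : IsSelfAdjoint y := by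
    rw [isSelfAdjoint_iff]
    ext1 i j
    rw [CStarMatrix.star_apply]
    have : h i j = star (h j i) := (CStarMatrix.star_apply_of_isSelfAdjoint hh).symm
    change star (T₁ (h j i) - T₂ (h j i)) = T₁ (h i j) - T₂ (h i j)
    rw [this, cp_star hT₁, cp_star hT₂, star_sub]
  have h2 : νB n (CStarMatrix.ofMatrix.symm (-y)) ≤ α := by
    have e := hB.smul_eq (-1) y
    rw [neg_one_smul] at e
    simp only [norm_neg, norm_one, one_mul] at e
    rw [e]
    refine (hcb n (CStarMatrix.ofMatrix.symm h)).trans ?_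
    nlinarith
  have key : ∀ r : ℝ, α < r → -(r * ∑ i, ‖ξ i‖ ^ 2) ≤ phi T₁ ξ h - phi T₂ ξ h := by
    intro r hr
    have h3 := hB.le_smul_one (-y) hys.neg (h2.trans_lt hr)
    obtain ⟨z, hz⟩ := exists_star_mul_of_nonneg (nonneg_sub h3)
    have h4 := form_nonneg (CStarMatrix.ofMatrix.symm z) ξ
    have e : ∀ i j, (star (CStarMatrix.ofMatrix.symm z) * (CStarMatrix.ofMatrix.symm z)) i j
        = (if i = j then (r : ℂ) • (1 : H →L[ℂ] H) else 0) + (T₁ (h i j) - T₂ (h i j)) := by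
      intro i j
      have h5 : (star z * z) i j = _ := congrFun (congrFun hz.symm i) j
      refine h5.trans ?_
      rw [sub_neg_eq_add, CStarMatrix.add_apply,
        CStarMatrix.smul_apply, CStarMatrix.one_apply]
      congr 1
      split_ifs
      · rfl
      · simp
    simp only [e] at h4
    have e2 : ∀ i j, (⟪ξ i, ((if i = j then (r : ℂ) • (1 : H →L[ℂ] H) else 0)
        + (T₁ (h i j) - T₂ (h i j))) (ξ j)⟫_ℂ).re
        = (if i = j then r * ‖ξ i‖ ^ 2 else 0)
          + ((⟪ξ i, T₁ (h i j) (ξ j)⟫_ℂ).re - (⟪ξ i, T₂ (h i j) (ξ j)⟫_ℂ).re) := by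
      intro i j
      rw [ContinuousLinearMap.add_apply, inner_add_right, Complex.add_re,
        ContinuousLinearMap.sub_apply, inner_sub_right, Complex.sub_re]
      congr 1
      split_ifs with hij
      · subst hij
        rw [ContinuousLinearMap.smul_apply, ContinuousLinearMap.one_apply, inner_smul_right,
          inner_self_eq_norm_sq_to_K, Complex.re_ofReal_mul]
        congr 1
        norm_cast
      · simp
    simp only [e2, Finset.sum_add_distrib, Finset.sum_sub_distrib, Finset.sum_ite_eq,
      Finset.mem_univ, if_true, ← Finset.mul_sum] at h4
    rw [phi_apply, phi_apply]
    linarith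
  by_contra hlt
  push Not at hlt
  set S := ∑ i, ‖ξ i‖ ^ 2 with hS
  have hS0 : 0 ≤ S := Finset.sum_nonneg fun i _ => by positivity
  set D := phi T₁ ξ h - phi T₂ ξ h with hD
  have h6 := key (α + (-(α * S) - D) / (2 * (S + 1))) (by
    have : 0 < (-(α * S) - D) / (2 * (S + 1)) := by apply div_pos <;> linarith
    linarith)
  have h7 : (-(α * S) - D) / (2 * (S + 1)) * S ≤ (-(α * S) - D) / 2 := by
    rw [div_mul_eq_mul_div, div_le_div_iff₀ (by positivity) (by positivity)]
    nlinarith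
  nlinarith

/-- scalar diagonal matrices -/
def dg {n : ℕ} (s : Fin n → ℝ) : CStarMatrix (Fin n) (Fin n) A :=
  CStarMatrix.ofMatrix (Matrix.diagonal fun i => ((s i : ℝ) : ℂ) • (1 : A))

lemma dg_mul {n : ℕ} (s t : Fin n → ℝ) : (dg s : CStarMatrix (Fin n) (Fin n) A) * dg t
    = dg (fun i => s i * t i) := by
  refine (Matrix.diagonal_mul_diagonal _ _).trans ?_
  unfold dg
  congr 2; ext1 i
  rw [smul_mul_smul_comm, one_mul, ← Complex.ofReal_mul]

lemma dg_one {n : ℕ} : (dg (fun _ => 1) : CStarMatrix (Fin n) (Fin n) A) = 1 := by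
  have : (dg (fun _ => 1) : CStarMatrix (Fin n) (Fin n) A)
    = CStarMatrix.ofMatrix (Matrix.diagonal fun _ => 1) := by simp [dg]
  rw [this, Matrix.diagonal_one]; rfl

lemma dg_add {n : ℕ} (s t : Fin n → ℝ) : (dg s : CStarMatrix (Fin n) (Fin n) A) + dg t
    = dg (fun i => s i + t i) := by
  refine (Matrix.diagonal_add _ _).trans ?_
  unfold dg
  congr 1; ext1 i
  simp [add_smul]

lemma dg_zero {n : ℕ} : (dg (fun _ => 0) : CStarMatrix (Fin n) (Fin n) A) = 0 := by
  have : (dg (fun _ => 0) : CStarMatrix (Fin n) (Fin n) A)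
    = CStarMatrix.ofMatrix (Matrix.diagonal fun _ => 0) := by simp [dg]
  rw [this, Matrix.diagonal_zero]; rfl

lemma dg_smul {n : ℕ} (r : ℝ) (s : Fin n → ℝ) :
    (r : ℂ) • (dg s : CStarMatrix (Fin n) (Fin n) A) = dg (fun i => r * s i) := by
  refine (Matrix.diagonal_smul _ _).symm.trans ?_
  unfold dg
  congr 2; ext1 i
  rw [Pi.smul_apply, smul_smul, ← Complex.ofReal_mul]

lemma dg_star {n : ℕ} (s : Fin n → ℝ) : star (dg s : CStarMatrix (Fin n) (Fin n) A) = dg s := by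
  refine (Matrix.diagonal_conjTranspose _).trans ?_
  unfold dg
  congr 1; ext1 i
  simp

lemma dg_apply {n : ℕ} (s : Fin n → ℝ) (i j : Fin n) :
    (dg s : CStarMatrix (Fin n) (Fin n) A) i j = if i = j then ((s i : ℝ) : ℂ) • (1 : A) else 0 :=
  Matrix.diagonal_apply _ _ _

lemma phi_dg (T : A →ₗ[ℂ] (H →L[ℂ] H)) {n : ℕ} (ξ : Fin n → H) (s : Fin n → ℝ) :
    phi T ξ (dg s) = ∑ i, s i * (⟪ξ i, T 1 (ξ i)⟫_ℂ).re := by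
  rw [phi_apply]
  refine Finset.sum_congr rfl fun i _ => ?_
  rw [Finset.sum_eq_single i]
  · rw [dg_apply, if_pos rfl]; simp [inner_smul_right]
  · intro j _ hj; rw [dg_apply, if_neg hj.symm]; simp
  · simp

lemma phi_conj (T : A →ₗ[ℂ] (H →L[ℂ] H)) {n : ℕ} (ξ : Fin n → H) (s : Fin n → ℝ)
    (M : CStarMatrix (Fin n) (Fin n) A) :
    phi T ξ (dg s * M * dg s) = phi T (fun i => ((s i : ℝ) : ℂ) • ξ i) M := by
  rw [phi_apply, phi_apply]
  refine Finset.sum_congr rfl fun i _ => Finset.sum_congr rfl fun j _ => ?_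
  have e : (dg s * M * dg s : CStarMatrix (Fin n) (Fin n) A) i j = ((s i : ℝ) : ℂ) • ((s j : ℝ) : ℂ) • M i j := by
    have h1 : (dg s * M * dg s : CStarMatrix (Fin n) (Fin n) A) i j = (((s i : ℝ) : ℂ) • (1 : A)) * M i j * (((s j : ℝ) : ℂ) • (1 : A)) := by
      refine (Matrix.mul_diagonal _ _ _ _).trans ?_
      congr 1
      exact Matrix.diagonal_mul _ _ _ _
    rw [h1]; simp [smul_smul, mul_comm]
  rw [e]
  simp [inner_smul_right, inner_smul_left]
  ring

end MatrixPart


section KeyAlg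

variable {R : Type*} [CStarAlgebra R] [PartialOrder R] [StarOrderedRing R]

lemma key_alg {D D' E B P Q : R} (hD : star D = D) (hD' : star D' = D') (h1 : D * D' = 1)
    (h2 : D' * D = 1) (hE : 0 ≤ E) (hB : B + E = D * D) (hP : 0 ≤ P)
    (hQ : ∀ w : R, 0 ≤ Q + star w * B + star B * w + star w * P * w) :
    ∃ h : R, IsSelfAdjoint h ∧ ‖h‖ ≤ 1 ∧ 0 ≤ (Q + E) - D * (1 - h) * D ∧
      0 ≤ (P + E) - D * (1 + h) * D := by
  have hP' : 0 ≤ D' * (P + E) * D' := by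
    have := star_left_conjugate_nonneg (add_nonneg hP hE) D'
    rwa [hD'] at this
  obtain ⟨w', h, hw', hh, hn, he, hle⟩ := exists_weight _ hP'
  refine ⟨h, hh, hn, ?_, ?_⟩
  · have q1 := hQ (-(D' * w' * D))
    have q2 := star_left_conjugate_nonneg hE (1 + -(D' * w' * D))
    have q3 := add_nonneg q1 q2
    have hBs : star B = B := by
      have : B = D * D - E := by rw [← hB]; abel
      rw [this, star_sub, star_mul, hD, (IsSelfAdjoint.of_nonneg hE).star_eq]
    have hws : star (-(D' * w' * D)) = -(D * w' * D') := by
      simp [hD, hD', hw'.star_eq, mul_assoc]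
    rw [star_add, hws, star_one, hBs] at q3
    have e : Q + -(D * w' * D') * B + B * -(D' * w' * D) + -(D * w' * D') * P * -(D' * w' * D) +
      (1 + -(D * w' * D')) * E * (1 + -(D' * w' * D))
      = Q + E - D * w' * (D' * (B + E)) - ((B + E) * D') * w' * D
        + D * (w' * (D' * (P + E) * D') * w') * D := by noncomm_ring
    have e1 : D' * (B + E) = D := by rw [hB, ← mul_assoc, h2, one_mul]
    have e2 : (B + E) * D' = D := by rw [hB, mul_assoc, h1, mul_one]
    have e3 : w' * (D' * (P + E) * D') * w' = h - 1 + (w' + w') := by rw [he]; abel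
    rw [e, e1, e2, e3] at q3
    convert q3 using 1
    noncomm_ring
  · have := star_left_conjugate_nonneg (sub_nonneg.2 hle) D
    rw [hD] at this
    have e1 : D * (D' * (P + E) * D') * D = P + E := by
      calc _ = (D * D') * (P + E) * (D' * D) := by noncomm_ring
        _ = _ := by rw [h1, h2, one_mul, mul_one]
    rw [mul_sub, sub_mul, e1] at this
    exact this

end KeyAlg

section KeyFin

open scoped InnerProductSpace

variable {A : Type*} [CStarAlgebra A] [PartialOrder A] [StarOrderedRing A]
  {H : Type*} [NormedAddCommGroup H] [InnerProductSpace ℂ H] [CompleteSpace H]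

/-- the quantity bounding `2 Re ⟪V₁ ξ, V₂ ξ⟫` from below. -/
def dfun (T₁ T₂ : A →ₗ[ℂ] (H →L[ℂ] H)) (α : ℝ) (ξ : H) : ℝ :=
  (⟪ξ, T₁ 1 ξ⟫_ℂ).re + (⟪ξ, T₂ 1 ξ⟫_ℂ).re - α * ‖ξ‖ ^ 2

lemma dg_nonneg {n : ℕ} {s : Fin n → ℝ} (hs : ∀ i, 0 ≤ s i) :
    0 ≤ (dg s : CStarMatrix (Fin n) (Fin n) A) := by
  have : (dg s : CStarMatrix (Fin n) (Fin n) A)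
      = star (dg fun i => √(s i)) * dg fun i => √(s i) := by
    rw [dg_star, dg_mul]; congr 1; ext i; exact (Real.mul_self_sqrt (hs i)).symm
  rw [this]
  exact star_mul_self_nonneg _

lemma key_fin {T₁ T₂ : A →ₗ[ℂ] (H →L[ℂ] H)} (hT₁ : IsCPMap T₁) (hT₂ : IsCPMap T₂)
    (α : ℝ)
    (hdiff : ∀ (n : ℕ) (ξ : Fin n → H) (h : CStarMatrix (Fin n) (Fin n) A), IsSelfAdjoint h →
      ‖h‖ ≤ 1 → -(α * ∑ i, ‖ξ i‖ ^ 2) ≤ phi T₁ ξ h - phi T₂ ξ h)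
    {n : ℕ} (ξ : Fin n → H) (P Q : CStarMatrix (Fin n) (Fin n) A) (ρ : Fin n → ℝ)
    (hρ : ∀ i, 0 ≤ ρ i) (hP : 0 ≤ P)
    (hQ : ∀ w : CStarMatrix (Fin n) (Fin n) A,
      0 ≤ Q + star w * dg ρ + star (dg ρ) * w + star w * P * w) :
    ∑ i, ρ i * dfun T₁ T₂ α (ξ i) ≤ phi T₁ ξ P + phi T₂ ξ Q := by
  have key : ∀ ε : ℝ, 0 < ε → ∑ i, ρ i * dfun T₁ T₂ α (ξ i) - ε * (α * ∑ i, ‖ξ i‖ ^ 2)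
      ≤ phi T₁ ξ P + phi T₂ ξ Q := by
    intro ε hε
    have hpos : ∀ i, 0 < ρ i + ε := fun i => by have := hρ i; linarith
    set s : Fin n → ℝ := fun i => √(ρ i + ε) with hs
    have hss : ∀ i, s i * s i = ρ i + ε := fun i => Real.mul_self_sqrt (hpos i).le
    have hs0 : ∀ i, s i ≠ 0 := fun i => (Real.sqrt_pos.2 (hpos i)).ne'
    obtain ⟨h, hh, hn, h1, h2⟩ := key_alg (D := dg s) (D' := dg fun i => (s i)⁻¹)
      (E := dg fun _ => ε) (B := dg ρ) (dg_star _) (dg_star _)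
      (by rw [dg_mul, ← dg_one]; congr 1; ext i; exact mul_inv_cancel₀ (hs0 i))
      (by rw [dg_mul, ← dg_one]; congr 1; ext i; exact inv_mul_cancel₀ (hs0 i))
      (dg_nonneg fun _ => hε.le)
      (by rw [dg_mul, dg_add]; congr 1; ext i; exact (hss i).symm) hP hQ
    have p1 := phi_nonneg hT₂ ξ h1
    have p2 := phi_nonneg hT₁ ξ h2
    have e : ∀ T : A →ₗ[ℂ] (H →L[ℂ] H), phi T (fun i => ((s i : ℝ) : ℂ) • ξ i) 1
        = ∑ i, (ρ i + ε) * (⟪ξ i, T 1 (ξ i)⟫_ℂ).re := by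
      intro T
      rw [← phi_conj, mul_one, dg_mul, phi_dg]
      simp only [hss]
    rw [map_sub, map_add, phi_conj, phi_dg, map_sub, e] at p1
    rw [map_sub, map_add, phi_conj, phi_dg, map_add, e] at p2
    have p3 := hdiff n (fun i => ((s i : ℝ) : ℂ) • ξ i) h hh hn
    have e2 : ∑ i, ‖((s i : ℝ) : ℂ) • ξ i‖ ^ 2 = ∑ i, (ρ i + ε) * ‖ξ i‖ ^ 2 := by
      refine Finset.sum_congr rfl fun i _ => ?_
      rw [norm_smul, mul_pow, Complex.norm_real, Real.norm_eq_abs, sq_abs, sq, hss]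
    rw [e2] at p3
    have e3 : ∑ i, ρ i * dfun T₁ T₂ α (ξ i) = ∑ i, ρ i * (⟪ξ i, T₁ 1 (ξ i)⟫_ℂ).re
        + ∑ i, ρ i * (⟪ξ i, T₂ 1 (ξ i)⟫_ℂ).re - α * ∑ i, ρ i * ‖ξ i‖ ^ 2 := by
      rw [Finset.mul_sum, ← Finset.sum_add_distrib, ← Finset.sum_sub_distrib]
      refine Finset.sum_congr rfl fun i _ => ?_
      unfold dfun; ring
    rw [e3]
    simp only [add_mul, Finset.sum_add_distrib] at p1 p2 p3
    rw [← Finset.mul_sum (f := fun i => ‖ξ i‖ ^ 2)] at p3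
    linarith
  by_contra hlt
  push Not at hlt
  set C := α * ∑ i, ‖ξ i‖ ^ 2
  set L := ∑ i, ρ i * dfun T₁ T₂ α (ξ i)
  set G := phi T₁ ξ P + phi T₂ ξ Q
  have h6 := key ((L - G) / (2 * (|C| + 1))) (by
    apply div_pos
    · linarith
    · positivity)
  have h7 : (L - G) / (2 * (|C| + 1)) * C ≤ (L - G) / 2 := by
    rw [div_mul_eq_mul_div, div_le_div_iff₀ (by positivity) (by positivity)]
    nlinarith [le_abs_self C]
  linarith

end KeyFin

lemma smul_nonneg_complex {R : Type*} [CStarAlgebra R] [PartialOrder R] [StarOrderedRing R]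
    {M : R} (h : 0 ≤ M) {r : ℝ} (hr : 0 ≤ r) : 0 ≤ (r : ℂ) • M := by
  obtain ⟨y, rfl⟩ := exists_star_mul_of_nonneg h
  have : (r : ℂ) • (star y * y) = star (((√r : ℝ) : ℂ) • y) * (((√r : ℝ) : ℂ) • y) := by
    rw [star_smul, smul_mul_smul_comm]
    congr 1
    simp [← Complex.ofReal_mul, Real.mul_self_sqrt hr]
  rw [this]
  exact star_mul_self_nonneg _

section Cone

set_option linter.unusedSectionVars false

open scoped InnerProductSpace

variable {A : Type*} [CStarAlgebra A] [PartialOrder A] [StarOrderedRing A]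
  {H : Type*} [NormedAddCommGroup H] [InnerProductSpace ℂ H] [CompleteSpace H]

/-- enumeration of a finite set of vectors. -/
def xi (F : Finset H) (i : Fin F.card) : H := (F.equivFin.symm i : H)

lemma sum_xi {M : Type*} [AddCommMonoid M] (F : Finset H) (g : H → M) :
    ∑ i, g (xi F i) = ∑ x ∈ F, g x := by
  rw [← Finset.sum_coe_sort F g]
  exact Equiv.sum_comp F.equivFin.symm (fun x : F => g x)

lemma xi_injective (F : Finset H) : Function.Injective (xi F) := fun i j h =>
  F.equivFin.symm.injective (Subtype.ext h)

/-- the matrix of coefficients of `z` along `F`. -/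
def Zm (F : Finset H) (z : H × H →₀ A) : CStarMatrix (Fin F.card) (Fin F.card) A :=
  CStarMatrix.ofMatrix (Matrix.of fun i j => z (xi F i, xi F j))

lemma Zm_zero (F : Finset H) : Zm F (0 : H × H →₀ A) = 0 := rfl

lemma Zm_add (F : Finset H) (y z : H × H →₀ A) : Zm F (y + z) = Zm F y + Zm F z := rfl

lemma Zm_smul (F : Finset H) (r : ℝ) (z : H × H →₀ A) : Zm F (r • z) = (r : ℂ) • Zm F z := by
  ext1 i j
  exact (Complex.coe_smul r (z (xi F i, xi F j))).symm

/-- the finite level condition. -/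
def FinOk (T₁ T₂ : A →ₗ[ℂ] (H →L[ℂ] H)) (α : ℝ) (F : Finset H) (z : H × H →₀ A) (t : ℝ) : Prop :=
  ∃ (P Q : CStarMatrix (Fin F.card) (Fin F.card) A) (ρ : Fin F.card → ℝ),
    (∀ i, 0 ≤ ρ i) ∧ 0 ≤ P ∧
    (∀ w : CStarMatrix (Fin F.card) (Fin F.card) A,
      0 ≤ Q + star w * (Zm F z + dg ρ) + star (Zm F z + dg ρ) * w + star w * P * w) ∧
    phi T₁ (xi F) P + phi T₂ (xi F) Q - ∑ i, ρ i * dfun T₁ T₂ α (xi F i) ≤ t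

variable {T₁ T₂ : A →ₗ[ℂ] (H →L[ℂ] H)} {α : ℝ}

lemma FinOk.add {F : Finset H} {y z : H × H →₀ A} {s t : ℝ} (h₁ : FinOk T₁ T₂ α F y s)
    (h₂ : FinOk T₁ T₂ α F z t) : FinOk T₁ T₂ α F (y + z) (s + t) := by
  obtain ⟨P, Q, ρ, a1, a2, a3, a4⟩ := h₁
  obtain ⟨P', Q', ρ', b1, b2, b3, b4⟩ := h₂
  refine ⟨P + P', Q + Q', fun i => ρ i + ρ' i, fun i => add_nonneg (a1 i) (b1 i),
    add_nonneg a2 b2, fun w => ?_, ?_⟩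
  · have := add_nonneg (a3 w) (b3 w)
    rw [Zm_add, ← dg_add]
    convert this using 1
    simp only [star_add, mul_add, add_mul]
    abel
  · simp only [map_add, add_mul, Finset.sum_add_distrib]
    linarith

lemma FinOk.smul {F : Finset H} {y : H × H →₀ A} {s : ℝ} (h₁ : FinOk T₁ T₂ α F y s) {r : ℝ}
    (hr : 0 ≤ r) : FinOk T₁ T₂ α F (r • y) (r * s) := by
  obtain ⟨P, Q, ρ, a1, a2, a3, a4⟩ := h₁
  refine ⟨(r : ℂ) • P, (r : ℂ) • Q, fun i => r * ρ i, fun i => mul_nonneg hr (a1 i),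
    smul_nonneg_complex a2 hr, fun w => ?_, ?_⟩
  · have := smul_nonneg_complex (a3 w) hr
    rw [Zm_smul, ← dg_smul, ← smul_add]
    convert this using 1
    generalize Zm F y + dg ρ = Z
    simp only [smul_add, star_smul, mul_smul_comm, smul_mul_assoc, RCLike.star_def,
      Complex.conj_ofReal]
  · simp only [phi_smul, mul_assoc, ← Finset.mul_sum]
    nlinarith

/-- the cone. -/
def InCone (T₁ T₂ : A →ₗ[ℂ] (H →L[ℂ] H)) (α : ℝ) (z : H × H →₀ A) (t : ℝ) : Prop :=
  ∃ F₀ : Finset H, ∀ F : Finset H, F₀ ⊆ F → FinOk T₁ T₂ α F z t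

lemma InCone.add {y z : H × H →₀ A} {s t : ℝ} (h₁ : InCone T₁ T₂ α y s)
    (h₂ : InCone T₁ T₂ α z t) : InCone T₁ T₂ α (y + z) (s + t) := by
  classical
  obtain ⟨F₁, h₁⟩ := h₁
  obtain ⟨F₂, h₂⟩ := h₂
  exact ⟨F₁ ∪ F₂, fun F hF => (h₁ F (Finset.union_subset_left hF)).add
    (h₂ F (Finset.union_subset_right hF))⟩

lemma InCone.smul {y : H × H →₀ A} {s : ℝ} (h₁ : InCone T₁ T₂ α y s) {r : ℝ}
    (hr : 0 ≤ r) : InCone T₁ T₂ α (r • y) (r * s) := by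
  obtain ⟨F₁, h₁⟩ := h₁
  exact ⟨F₁, fun F hF => (h₁ F hF).smul hr⟩

lemma InCone.zero : InCone T₁ T₂ α (0 : H × H →₀ A) 0 := by
  refine ⟨∅, fun F _ => ⟨0, 0, fun _ => 0, fun _ => le_rfl, le_rfl, fun w => ?_, ?_⟩⟩
  · simp [Zm_zero, dg_zero]
  · simp

lemma row_nonneg {n : ℕ} (a b : Fin n → A) (w : CStarMatrix (Fin n) (Fin n) A) :
    0 ≤ CStarMatrix.ofMatrix (Matrix.of fun i j => star (b i) * b j)
      + star w * CStarMatrix.ofMatrix (Matrix.of fun i j => star (a i) * b j)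
      + star (CStarMatrix.ofMatrix (Matrix.of fun i j => star (a i) * b j)) * w
      + star w * CStarMatrix.ofMatrix (Matrix.of fun i j => star (a i) * a j) * w := by
  cases n with
  | zero => exact le_of_eq (by ext i j; exact i.elim0)
  | succ n =>
    set ra : CStarMatrix (Fin (n + 1)) (Fin (n + 1)) A :=
      CStarMatrix.ofMatrix (Matrix.of fun i j => if i = 0 then a j else 0) with hra
    set rb : CStarMatrix (Fin (n + 1)) (Fin (n + 1)) A :=
      CStarMatrix.ofMatrix (Matrix.of fun i j => if i = 0 then b j else 0) with hrb
    have e : ∀ f g : Fin (n + 1) → A,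
        (CStarMatrix.ofMatrix (Matrix.of fun i j => star (f i) * g j) :
          CStarMatrix (Fin (n + 1)) (Fin (n + 1)) A)
        = star (CStarMatrix.ofMatrix (Matrix.of fun i j => if i = 0 then f j else 0))
          * CStarMatrix.ofMatrix (Matrix.of fun i j => if i = 0 then g j else 0) := by
      intro f g
      ext1 i j
      rw [CStarMatrix.mul_apply]
      simp [CStarMatrix.star_apply]
    rw [e b b, e a b, e a a, ← hra, ← hrb]
    have := star_mul_self_nonneg (rb + ra * w)
    convert this using 1
    simp only [star_add, star_mul, star_star]
    noncomm_ring

lemma inCone_rows (a b : H → A) (S : Finset H) (ha : ∀ x, x ∉ S → a x = 0)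
    (hb : ∀ x, x ∉ S → b x = 0) (z : H × H →₀ A) (hz : ∀ x y, z (x, y) = star (a x) * b y) :
    InCone T₁ T₂ α z (∑ x ∈ S, ∑ y ∈ S, (⟪x, T₁ (star (a x) * a y) y⟫_ℂ).re
      + ∑ x ∈ S, ∑ y ∈ S, (⟪x, T₂ (star (b x) * b y) y⟫_ℂ).re) := by
  refine ⟨S, fun F hF => ⟨CStarMatrix.ofMatrix (Matrix.of fun i j =>
      star (a (xi F i)) * a (xi F j)), CStarMatrix.ofMatrix (Matrix.of fun i j =>
      star (b (xi F i)) * b (xi F j)), fun _ => 0, fun _ => le_rfl, ?_, fun w => ?_, ?_⟩⟩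
  · have := row_nonneg 0 (fun i => a (xi F i)) 0
    simpa using this
  · have e : Zm F z + dg (fun _ => 0) = CStarMatrix.ofMatrix (Matrix.of fun i j =>
        star (a (xi F i)) * b (xi F j)) := by
      rw [dg_zero, add_zero]
      ext1 i j
      exact hz _ _
    rw [e]
    exact row_nonneg _ _ _
  · have e : ∀ (T : A →ₗ[ℂ] (H →L[ℂ] H)) (c : H → A), (∀ x, x ∉ S → c x = 0) →
        phi T (xi F) (CStarMatrix.ofMatrix (Matrix.of fun i j => star (c (xi F i)) * c (xi F j)))
        = ∑ x ∈ S, ∑ y ∈ S, (⟪x, T (star (c x) * c y) y⟫_ℂ).re := by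
      intro T c hc
      rw [phi_apply]
      have h1 : ∀ x : H, ∑ j, (⟪x, T (star (c x) * c (xi F j)) (xi F j)⟫_ℂ).re
          = ∑ y ∈ S, (⟪x, T (star (c x) * c y) y⟫_ℂ).re := by
        intro x
        rw [sum_xi F (fun y => (⟪x, T (star (c x) * c y) y⟫_ℂ).re)]
        exact (Finset.sum_subset hF fun y _ hy => by simp [hc y hy]).symm
      refine (Finset.sum_congr rfl fun i _ => h1 (xi F i)).trans ?_
      rw [sum_xi F (fun x => ∑ y ∈ S, (⟪x, T (star (c x) * c y) y⟫_ℂ).re)]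
      exact (Finset.sum_subset hF fun y _ hy => by simp [hc y hy]).symm
    rw [e T₁ a ha, e T₂ b hb]
    simp

lemma inCone_diag (ξ : H) :
    InCone T₁ T₂ α (-Finsupp.single (ξ, ξ) (1 : A)) (-dfun T₁ T₂ α ξ) := by
  classical
  refine ⟨{ξ}, fun F hF => ⟨0, 0, fun i => if xi F i = ξ then 1 else 0, fun i => ?_, le_rfl,
    fun w => ?_, ?_⟩⟩
  · dsimp only; split_ifs <;> norm_num
  · have e : Zm F (-Finsupp.single (ξ, ξ) (1 : A)) + dg (fun i => if xi F i = ξ then 1 else 0)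
        = 0 := by
      ext1 i j
      rw [CStarMatrix.add_apply, dg_apply]
      change -(Finsupp.single (ξ, ξ) (1 : A)) (xi F i, xi F j) + _ = 0
      rw [Finsupp.single_apply]
      by_cases hi : xi F i = ξ
      · by_cases hij : i = j
        · subst hij; simp [hi]
        · have : ¬ ξ = xi F j := fun h => hij (xi_injective F (hi.trans h))
          simp [hi, hij, this]
      · have : ¬ ξ = xi F i := fun h => hi h.symm
        simp [hi, this]
    rw [e]; simp
  · rw [sum_xi F (fun x => (if x = ξ then (1 : ℝ) else 0) * dfun T₁ T₂ α x)]
    have : ξ ∈ F := hF (by simp)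
    simp [this]

lemma inCone_exists (z : H × H →₀ A) : ∃ t, InCone T₁ T₂ α z t := by
  classical
  induction z using Finsupp.induction_linear with
  | zero => exact ⟨0, InCone.zero⟩
  | add f g hf hg =>
    obtain ⟨s, hs⟩ := hf
    obtain ⟨t, ht⟩ := hg
    exact ⟨s + t, hs.add ht⟩
  | single p c =>
    obtain ⟨ξ, η⟩ := p
    refine ⟨_, inCone_rows (fun x => if x = ξ then 1 else 0) (fun x => if x = η then c else 0)
      {ξ, η} ?_ ?_ _ ?_⟩
    · intro x hx; simp at hx; simp [hx.1]
    · intro x hx; simp at hx; simp [hx.2]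
    · intro x y
      rw [Finsupp.single_apply]
      by_cases h1 : x = ξ <;> by_cases h2 : y = η <;> simp [h1, h2, Ne.symm, eq_comm]

lemma exists_functional (hT₁ : IsCPMap T₁) (hT₂ : IsCPMap T₂)
    (hdiff : ∀ (n : ℕ) (ξ : Fin n → H) (h : CStarMatrix (Fin n) (Fin n) A), IsSelfAdjoint h →
      ‖h‖ ≤ 1 → -(α * ∑ i, ‖ξ i‖ ^ 2) ≤ phi T₁ ξ h - phi T₂ ξ h) :
    ∃ X : (H × H →₀ A) →ₗ[ℂ] ℂ, ∀ z t, InCone T₁ T₂ α z t → 2 * (X z).re ≤ t := by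
  let s : PointedCone ℝ ((H × H →₀ A) × ℝ) :=
    { carrier := {p | InCone T₁ T₂ α p.1 p.2}
      add_mem' := fun h₁ h₂ => InCone.add h₁ h₂
      zero_mem' := InCone.zero
      smul_mem' := fun c _ h => InCone.smul h c.2 }
  let f : ((H × H →₀ A) × ℝ) →ₗ.[ℝ] ℝ :=
    { domain := LinearMap.ker (LinearMap.fst ℝ (H × H →₀ A) ℝ)
      toFun := (LinearMap.snd ℝ (H × H →₀ A) ℝ).comp (Submodule.subtype _) }
  obtain ⟨g, hg1, hg2⟩ := riesz_extension s f (by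
    rintro ⟨⟨z, t⟩, hz⟩ hs
    have hz0 : z = 0 := hz
    subst hz0
    obtain ⟨F, hF⟩ := (hs : InCone T₁ T₂ α 0 t)
    obtain ⟨P, Q, ρ, h1, h2, h3, h4⟩ := hF F subset_rfl
    rw [Zm_zero, zero_add] at h3
    have := key_fin hT₁ hT₂ α hdiff (xi F) P Q ρ h1 h2 h3
    change 0 ≤ t
    linarith) (by
    rintro ⟨z, t⟩
    obtain ⟨t', ht'⟩ := inCone_exists (T₁ := T₁) (T₂ := T₂) (α := α) z
    refine ⟨⟨(0, t' - t), rfl⟩, ?_⟩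
    change InCone T₁ T₂ α (0 + z) (t' - t + t)
    rwa [zero_add, sub_add_cancel])
  let fr : Module.Dual ℝ (H × H →₀ A) :=
    (-(1 / 2 : ℝ)) • g.comp (LinearMap.inl ℝ (H × H →₀ A) ℝ)
  refine ⟨fr.extendRCLike (𝕜 := ℂ), fun z t h => ?_⟩
  have h1 : (fr.extendRCLike (𝕜 := ℂ) z).re = fr z := by
    have := Module.Dual.re_extendRCLike_apply (𝕜 := ℂ) fr z
    rwa [RCLike.re_eq_complex_re] at this
  rw [h1]
  have h2 : fr z = -(1 / 2 : ℝ) * g (z, 0) := rfl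
  have h3 : 0 ≤ g (z, t) := hg2 (z, t) h
  have h4 : g (0, t) = t := hg1 ⟨(0, t), rfl⟩
  have h5 : g (z, t) = g (z, 0) + g (0, t) := by rw [← map_add]; simp
  rw [h2]
  linarith

end Cone

section Final

open UniformSpace
open scoped InnerProductSpace

set_option linter.unusedSectionVars false

variable {A : Type u} [CStarAlgebra A]
  {H : Type v} [NormedAddCommGroup H] [InnerProductSpace ℂ H] [CompleteSpace H]

/-- matrix coefficients of `T`. -/
def coef (T : A →ₗ[ℂ] (H →L[ℂ] H)) (ξ η : H) : A →ₗ[ℂ] ℂ where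
  toFun a := ⟪ξ, T a η⟫_ℂ
  map_add' a b := by simp [inner_add_right]
  map_smul' c a := by simp [inner_smul_right]

/-- the lower off-diagonal coefficients. -/
def cross (X : (H × H →₀ A) →ₗ[ℂ] ℂ) (ξ η : H) : A →ₗ[ℂ] ℂ where
  toFun a := starRingEnd ℂ (X (Finsupp.single (η, ξ) (star a)))
  map_add' a b := by simp [Finsupp.single_add]
  map_smul' c a := by simp [← Finsupp.smul_single]

/-- the joint kernel. -/
def bigK (T₁ T₂ : A →ₗ[ℂ] (H →L[ℂ] H)) (X : (H × H →₀ A) →ₗ[ℂ] ℂ) :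
    H ⊕ H → H ⊕ H → A →ₗ[ℂ] ℂ
  | Sum.inl ξ, Sum.inl η => coef T₁ ξ η
  | Sum.inl ξ, Sum.inr η => X.comp (Finsupp.lsingle (ξ, η))
  | Sum.inr ξ, Sum.inl η => cross X ξ η
  | Sum.inr ξ, Sum.inr η => coef T₂ ξ η

lemma coef_herm {T : A →ₗ[ℂ] (H →L[ℂ] H)} (hT : ∀ a, T (star a) = star (T a)) (ξ η : H) (a : A) :
    coef T η ξ (star a) = starRingEnd ℂ (coef T ξ η a) := by
  change ⟪η, T (star a) ξ⟫_ℂ = starRingEnd ℂ ⟪ξ, T a η⟫_ℂ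
  rw [hT, ContinuousLinearMap.star_eq_adjoint, ContinuousLinearMap.adjoint_inner_right,
    inner_conj_symm]

lemma bigK_pd [PartialOrder A] [StarOrderedRing A] {T₁ T₂ : A →ₗ[ℂ] (H →L[ℂ] H)} {α : ℝ}
    (hT₁ : ∀ a, T₁ (star a) = star (T₁ a)) (hT₂ : ∀ a, T₂ (star a) = star (T₂ a))
    (X : (H × H →₀ A) →ₗ[ℂ] ℂ)
    (hX : ∀ z t, InCone T₁ T₂ α z t → 2 * (X z).re ≤ t) : IsPDKernel (bigK T₁ T₂ X) where
  herm := by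
    rintro (ξ | ξ) (η | η) a
    · exact coef_herm hT₁ ξ η a
    · change starRingEnd ℂ (X (Finsupp.single (ξ, η) (star (star a)))) = _
      rw [star_star]; rfl
    · change _ = starRingEnd ℂ (starRingEnd ℂ (X (Finsupp.single (η, ξ) (star a))))
      rw [Complex.conj_conj]; rfl
    · exact coef_herm hT₂ ξ η a
  pos := by
    classical
    intro w
    set S : Finset H := w.support.toLeft ∪ w.support.toRight with hS
    have hsub : w.support ⊆ S.disjSum S := by
      rintro (x | x) hx <;> simp only [Finset.inl_mem_disjSum, Finset.inr_mem_disjSum, hS,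
        Finset.mem_union, Finset.mem_toLeft, Finset.mem_toRight]
      · exact Or.inl hx
      · exact Or.inr hx
    have hl : ∀ x, x ∉ S → w (Sum.inl x) = 0 := by
      intro x hx
      by_contra h
      exact hx (Finset.mem_union_left _ (Finset.mem_toLeft.2 (Finsupp.mem_support_iff.2 h)))
    have hr : ∀ x, x ∉ S → w (Sum.inr x) = 0 := by
      intro x hx
      by_contra h
      exact hx (Finset.mem_union_right _ (Finset.mem_toRight.2 (Finsupp.mem_support_iff.2 h)))
    set a : H → A := fun x => - w (Sum.inl x) with ha
    set b : H → A := fun x => w (Sum.inr x) with hb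
    set z : H × H →₀ A := ∑ x ∈ S, ∑ y ∈ S, Finsupp.single (x, y) (star (a x) * b y) with hz
    have hzv : ∀ x y, z (x, y) = star (a x) * b y := by
      intro x y
      rw [hz, Finsupp.finset_sum_apply]
      simp only [Finsupp.finset_sum_apply, Finsupp.single_apply, Prod.mk.injEq]
      by_cases hx : x ∈ S
      · rw [Finset.sum_eq_single x]
        · by_cases hy : y ∈ S
          · rw [Finset.sum_eq_single y]
            · simp
            · intro y' _ h; simp [h]
            · intro h; exact absurd hy h
          · have : b y = 0 := hr y hy
            rw [this, mul_zero]
            refine Finset.sum_eq_zero fun y' hy' => ?_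
            rw [if_neg]
            rintro ⟨_, rfl⟩; exact hy hy'
        · intro x' _ h; simp [h]
        · intro h; exact absurd hx h
      · have : a x = 0 := by simp [ha, hl x hx]
        rw [this, star_zero, zero_mul]
        refine Finset.sum_eq_zero fun x' hx' => Finset.sum_eq_zero fun y' hy' => ?_
        rw [if_neg]
        rintro ⟨rfl, _⟩; exact hx hx'
    have h1 := hX z _ (inCone_rows a b S (fun x hx => by simp [ha, hl x hx]) hr z hzv)
    have h2 : kform (bigK T₁ T₂ X) w w = ∑ i ∈ S.disjSum S, ∑ j ∈ S.disjSum S,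
        bigK T₁ T₂ X i j (star (w i) * w j) := by
      unfold kform
      rw [Finsupp.sum_of_support_subset w hsub]
      · refine Finset.sum_congr rfl fun i _ => ?_
        rw [Finsupp.sum_of_support_subset w hsub]
        intro j _; simp
      · intro i _; simp [Finsupp.sum]
    have hXz : X z = - ∑ x ∈ S, ∑ y ∈ S,
        X (Finsupp.single (x, y) (star (w (Sum.inl x)) * w (Sum.inr y))) := by
      rw [hz, map_sum, ← Finset.sum_neg_distrib]
      refine Finset.sum_congr rfl fun x _ => ?_
      rw [map_sum, ← Finset.sum_neg_distrib]
      refine Finset.sum_congr rfl fun y _ => ?_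
      rw [← map_neg, ← Finsupp.single_neg, ha, hb]
      simp
    have hcr : ∑ x ∈ S, ∑ y ∈ S, cross X x y (star (w (Sum.inr x)) * w (Sum.inl y))
        = starRingEnd ℂ (∑ x ∈ S, ∑ y ∈ S,
        X (Finsupp.single (x, y) (star (w (Sum.inl x)) * w (Sum.inr y)))) := by
      rw [Finset.sum_comm, map_sum]
      refine Finset.sum_congr rfl fun x _ => ?_
      rw [map_sum]
      refine Finset.sum_congr rfl fun y _ => ?_
      simp [cross]
    simp only [Finset.sum_disjSum, Finset.sum_add_distrib] at h2
    change _ = ∑ x ∈ S, ∑ y ∈ S, ⟪x, T₁ (star (w (Sum.inl x)) * w (Sum.inl y)) y⟫_ℂ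
      + ∑ x ∈ S, ∑ y ∈ S, cross X x y (star (w (Sum.inr x)) * w (Sum.inl y))
      + (∑ x ∈ S, ∑ y ∈ S, X (Finsupp.single (x, y) (star (w (Sum.inl x)) * w (Sum.inr y)))
      + ∑ x ∈ S, ∑ y ∈ S, ⟪x, T₂ (star (w (Sum.inr x)) * w (Sum.inr y)) y⟫_ℂ) at h2
    rw [hcr] at h2
    rw [h2]
    rw [hXz, Complex.neg_re] at h1
    simp only [Complex.add_re, Complex.conj_re]
    simp only [ha, hb, star_neg, neg_mul_neg] at h1
    rw [Complex.re_sum, Complex.re_sum (s := S) (f := fun x => ∑ y ∈ S,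
      ⟪x, T₂ (star (w (Sum.inr x)) * w (Sum.inr y)) y⟫_ℂ)]
    simp only [Complex.re_sum (s := S) (f := fun y => ⟪_, T₁ _ y⟫_ℂ),
      Complex.re_sum (s := S) (f := fun y => ⟪_, T₂ _ y⟫_ℂ)]
    linarith

/-- A map with `⟪V ξ, V η⟫ = ⟪ξ, G η⟫` is a bounded operator. -/
lemma exists_clm {K : Type*} [NormedAddCommGroup K] [InnerProductSpace ℂ K] (V : H → K)
    (G : H →L[ℂ] H) (hV : ∀ ξ η, ⟪V ξ, V η⟫_ℂ = ⟪ξ, G η⟫_ℂ) :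
    ∃ W : H →L[ℂ] K, ∀ ξ, W ξ = V ξ := by
  have hadd : ∀ ξ η, V (ξ + η) = V ξ + V η := by
    intro ξ η
    rw [← sub_eq_zero, ← inner_self_eq_zero (𝕜 := ℂ)]
    simp only [inner_sub_left, inner_sub_right, inner_add_left, inner_add_right, hV, map_add]
    ring
  have hsmul : ∀ (c : ℂ) ξ, V (c • ξ) = c • V ξ := by
    intro c ξ
    rw [← sub_eq_zero, ← inner_self_eq_zero (𝕜 := ℂ)]
    simp only [inner_sub_left, inner_sub_right, inner_smul_left, inner_smul_right, hV, map_smul]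
    ring
  refine ⟨LinearMap.mkContinuous ⟨⟨V, hadd⟩, hsmul⟩ (√‖G‖) fun ξ => ?_, fun ξ => rfl⟩
  change ‖V ξ‖ ≤ _
  have h1 : ‖V ξ‖ ^ 2 ≤ ‖G‖ * ‖ξ‖ ^ 2 := by
    have h2 : ‖V ξ‖ ^ 2 = ‖⟪V ξ, V ξ⟫_ℂ‖ := by
      rw [inner_self_eq_norm_sq_to_K]; simp
    rw [h2, hV]
    calc _ ≤ ‖ξ‖ * ‖G ξ‖ := norm_inner_le_norm _ _
      _ ≤ ‖ξ‖ * (‖G‖ * ‖ξ‖) := by gcongr; exact G.le_opNorm ξ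
      _ = _ := by ring
  calc ‖V ξ‖ = √(‖V ξ‖ ^ 2) := (Real.sqrt_sq (norm_nonneg _)).symm
    _ ≤ √(‖G‖ * ‖ξ‖ ^ 2) := Real.sqrt_le_sqrt h1
    _ = √‖G‖ * ‖ξ‖ := by rw [Real.sqrt_mul (norm_nonneg _), Real.sqrt_sq (norm_nonneg _)]

end Final

theorem stmt1 {A : Type u} [CStarAlgebra A]
    {H : Type v} [NormedAddCommGroup H] [InnerProductSpace ℂ H] [CompleteSpace H]
    (T₁ T₂ : A →ₗ[ℂ] (H →L[ℂ] H)) (hT₁ : IsCPMap T₁) (hT₂ : IsCPMap T₂)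
    (νA : ∀ n : ℕ, Matrix (Fin n) (Fin n) A → ℝ)
    (νB : ∀ n : ℕ, Matrix (Fin n) (Fin n) (H →L[ℂ] H) → ℝ)
    (hνA : ∀ n, IsCStarNorm (νA n)) (hνB : ∀ n, IsCStarNorm (νB n))
    (α : ℝ) (hα : 0 ≤ α)
    (hcb : ∀ (n : ℕ) (x : Matrix (Fin n) (Fin n) A),
      νB n (x.map (fun a => T₁ a - T₂ a)) ≤ α * νA n x) :
    ∃ (K : Type (max u v)) (_ : NormedAddCommGroup K) (_ : InnerProductSpace ℂ K)
      (_ : CompleteSpace K) (π : A →⋆ₙₐ[ℂ] (K →L[ℂ] K)) (V₁ V₂ : H →L[ℂ] K),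
      IsStinespring T₁ π V₁ ∧ IsStinespring T₂ π V₂ ∧ ‖V₁ - V₂‖ ≤ Real.sqrt α := by
  letI : PartialOrder A := CStarAlgebra.spectralOrder A
  haveI : StarOrderedRing A := CStarAlgebra.spectralOrderedRing A
  obtain ⟨X, hX⟩ := exists_functional (α := α) hT₁ hT₂ fun n ξ h hh hn =>
    diff_bound hT₁ hT₂ νA νB hνA hνB α hα hcb ξ h hh hn
  have hκ : IsPDKernel (bigK T₁ T₂ X) := bigK_pd (cp_star hT₁) (cp_star hT₂) X hX
  obtain ⟨V₁, hV₁⟩ := exists_clm (fun ξ : H => vecK hκ (Sum.inl ξ)) (T₁ 1)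
    (fun ξ η => vecK_inner hκ _ _)
  obtain ⟨V₂, hV₂⟩ := exists_clm (fun ξ : H => vecK hκ (Sum.inr ξ)) (T₂ 1)
    (fun ξ η => vecK_inner hκ _ _)
  refine ⟨UniformSpace.Completion (PreK hκ), inferInstance, inferInstance, inferInstance,
    repK hκ, V₁, V₂, fun a => ?_, fun a => ?_, ?_⟩
  · ext η
    refine ext_inner_left ℂ fun ξ => ?_
    change _ = inner ℂ ξ (ContinuousLinearMap.adjoint V₁ (repK hκ a (V₁ η)))
    rw [ContinuousLinearMap.adjoint_inner_right, hV₁, hV₁, vecK_inner_rep]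
    rfl
  · ext η
    refine ext_inner_left ℂ fun ξ => ?_
    change _ = inner ℂ ξ (ContinuousLinearMap.adjoint V₂ (repK hκ a (V₂ η)))
    rw [ContinuousLinearMap.adjoint_inner_right, hV₂, hV₂, vecK_inner_rep]
    rfl
  · refine ContinuousLinearMap.opNorm_le_bound _ (Real.sqrt_nonneg _) fun ξ => ?_
    have h1 : ‖V₁ ξ - V₂ ξ‖ ^ 2 ≤ α * ‖ξ‖ ^ 2 := by
      have h2 := hX _ _ (inCone_diag (T₁ := T₁) (T₂ := T₂) (α := α) ξ)
      have h3 : ‖V₁ ξ - V₂ ξ‖ ^ 2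
          = ‖V₁ ξ‖ ^ 2 - 2 * (inner ℂ (V₁ ξ) (V₂ ξ)).re + ‖V₂ ξ‖ ^ 2 :=
        norm_sub_sq (𝕜 := ℂ) _ _
      have n1 : ‖V₁ ξ‖ ^ 2 = (inner ℂ ξ (T₁ 1 ξ)).re := by
        have : ‖V₁ ξ‖ ^ 2 = (inner ℂ (V₁ ξ) (V₁ ξ)).re := norm_sq_eq_re_inner (𝕜 := ℂ) _
        rw [this, hV₁, vecK_inner]; rfl
      have n2 : ‖V₂ ξ‖ ^ 2 = (inner ℂ ξ (T₂ 1 ξ)).re := by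
        have : ‖V₂ ξ‖ ^ 2 = (inner ℂ (V₂ ξ) (V₂ ξ)).re := norm_sq_eq_re_inner (𝕜 := ℂ) _
        rw [this, hV₂, vecK_inner]; rfl
      have n3 : inner ℂ (V₁ ξ) (V₂ ξ) = X (Finsupp.single (ξ, ξ) 1) := by
        rw [hV₁, hV₂, vecK_inner]; rfl
      rw [map_neg, Complex.neg_re] at h2
      unfold dfun at h2
      rw [h3, n1, n2, n3]
      linarith
    change ‖V₁ ξ - V₂ ξ‖ ≤ _
    calc ‖V₁ ξ - V₂ ξ‖ = √(‖V₁ ξ - V₂ ξ‖ ^ 2) := (Real.sqrt_sq (norm_nonneg _)).symm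
      _ ≤ √(α * ‖ξ‖ ^ 2) := Real.sqrt_le_sqrt h1
      _ = √α * ‖ξ‖ := by rw [Real.sqrt_mul hα, Real.sqrt_sq (norm_nonneg _)]
end
end

section
/- Let T1, T2 : A → B(H) be completely positive maps. Then there exists a common dilation (π, V1, K), (π, V2, K) of (T1, T2) that minimizes the distance between the dilating operators: for every complex Hilbert space K', every *-homomorphism π' : A → B(K'), and all bounded operators V1', V2' : H → K' with T_i(a) = V_i'* π'(a) V_i' for all a ∈ A and i = 1,2, one has ‖V1 − V2‖ ≤ ‖V1' − V2'‖. -/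
noncomputable section

universe u v

open scoped ComplexOrder InnerProductSpace TensorProduct
open ContinuousLinearMap UniformSpace Completion

theorem clm_compl_ext {E : Type v} [SeminormedAddCommGroup E] [InnerProductSpace ℂ E]
    (f g : Completion E →L[ℂ] Completion E) (h : ∀ x : E, f x = g x) : f = g := by
  ext c
  induction c using induction_on with
  | hp => exact isClosed_eq f.continuous g.continuous
  | ih c => exact h c

theorem inner_self_nonneg_c {E : Type v} [SeminormedAddCommGroup E] [InnerProductSpace ℂ E]
    (x : E) : 0 ≤ ⟪x, x⟫_ℂ :=
  Complex.nonneg_iff.2 ⟨inner_self_nonneg (𝕜 := ℂ), (inner_self_im (𝕜 := ℂ) x).symm⟩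

/-- Extending a bounded `⋆`-representation on a pre-Hilbert space to its completion. -/
theorem pre_gns {A : Type u} [CStarAlgebra A] {E : Type v} [SeminormedAddCommGroup E]
    [InnerProductSpace ℂ E] (ρ : A →ₐ[ℂ] Module.End ℂ E)
    (hρ : ∀ a x y, ⟪ρ a x, y⟫_ℂ = ⟪x, ρ (star a) y⟫_ℂ)
    (hbd : ∀ (a : A) (x : E), ‖ρ a x‖ ≤ ‖a‖ * ‖x‖) :
    ∃ (K : Type v) (_ : NormedAddCommGroup K) (_ : InnerProductSpace ℂ K)
      (_ : CompleteSpace K) (π : A →⋆ₙₐ[ℂ] (K →L[ℂ] K)) (J : E →ₗ[ℂ] K),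
      (∀ x y, ⟪J x, J y⟫_ℂ = ⟪x, y⟫_ℂ) ∧ ∀ a x, π a (J x) = J (ρ a x) := by
  let L : A → E →L[ℂ] E := fun a => (ρ a).mkContinuous ‖a‖ (hbd a)
  have hL : ∀ a x, L a x = ρ a x := fun _ _ => rfl
  let π : A →⋆ₙₐ[ℂ] (Completion E →L[ℂ] Completion E) :=
    { toFun := fun a => (L a).completion
      map_smul' := by
        intro m a
        refine clm_compl_ext _ _ fun c => ?_
        simp [hL]
      map_zero' := by
        refine clm_compl_ext _ _ fun c => ?_
        simp [hL, Completion.coe_zero]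
      map_add' := by
        intro a b
        refine clm_compl_ext _ _ fun c => ?_
        simp [hL, Completion.coe_add]
      map_mul' := by
        intro a b
        refine clm_compl_ext _ _ fun c => ?_
        simp [hL]
      map_star' := by
        intro a
        refine (eq_adjoint_iff (L (star a)).completion (L a).completion).mpr ?_
        intro x y
        induction x, y using induction_on₂ with
        | hp => apply isClosed_eq <;> fun_prop
        | ih x y => simp [hL, hρ] }
  refine ⟨Completion E, inferInstance, inferInstance, inferInstance, π,
    (toComplL : E →L[ℂ] Completion E).toLinearMap, ?_, ?_⟩
  · intro x y
    simp
  · intro a x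
    change (L a).completion (x : Completion E) = _
    simp [hL]

/-- GNS-type completion: a `⋆`-representation on a complex vector space with a positive
sesquilinear form induces a `⋆`-representation by bounded operators on a Hilbert space. -/
theorem gns_completion {A : Type u} [CStarAlgebra A] {E : Type v} [AddCommGroup E] [Module ℂ E]
    (B : E →ₗ⋆[ℂ] E →ₗ[ℂ] ℂ) (hpos : ∀ x, 0 ≤ B x x)
    (ρ : A →ₐ[ℂ] Module.End ℂ E) (hρ : ∀ a x y, B (ρ a x) y = B x (ρ (star a) y)) :
    ∃ (K : Type v) (_ : NormedAddCommGroup K) (_ : InnerProductSpace ℂ K)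
      (_ : CompleteSpace K) (π : A →⋆ₙₐ[ℂ] (K →L[ℂ] K)) (J : E →ₗ[ℂ] K),
      (∀ x y, ⟪J x, J y⟫_ℂ = B x y) ∧ ∀ a x, π a (J x) = J (ρ a x) := by
  have him : ∀ x, (B x x).im = 0 := fun x => ((Complex.nonneg_iff.1 (hpos x)).2).symm
  have hherm : ∀ x y, (starRingEnd ℂ) (B y x) = B x y := by
    intro x y
    have h1 := him (x + y)
    have h2 := him (x + Complex.I • y)
    simp only [map_add, LinearMap.add_apply, map_smulₛₗ, LinearMap.smul_apply, Complex.add_im,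
      him, smul_eq_mul, RingHom.id_apply, Complex.conj_I] at h1 h2
    simp [him] at h1 h2
    apply Complex.ext
    · simp; linarith
    · simp; linarith
  let core : PreInnerProductSpace.Core ℂ E :=
    { inner := fun x y => B x y
      conj_inner_symm := hherm
      re_inner_nonneg := fun x => (Complex.nonneg_iff.1 (hpos x)).1
      add_left := by intro x y z; simp
      smul_left := by intro x y r; simp }
  let : SeminormedAddCommGroup E := InnerProductSpace.Core.toSeminormedAddCommGroup (c := core)
  let : InnerProductSpace ℂ E := InnerProductSpace.ofCore core
  have hin : ∀ x y : E, ⟪x, y⟫_ℂ = B x y := fun _ _ => rfl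
  have hbd : ∀ (a : A) (x : E), ‖ρ a x‖ ≤ ‖a‖ * ‖x‖ := by
    intro a x
    rw [← sq_le_sq₀ (by positivity) (by positivity), mul_pow]
    let := CStarAlgebra.spectralOrder A
    let := CStarAlgebra.spectralOrderedRing A
    have hle : star a * a ≤ algebraMap ℝ A (‖a‖ ^ 2) := by
      have := (IsSelfAdjoint.star_mul_self a).le_algebraMap_norm_self
      rwa [CStarRing.norm_star_mul_self, ← sq] at this
    obtain ⟨d, hd⟩ := CStarAlgebra.nonneg_iff_eq_star_mul_self.1 (sub_nonneg.2 hle)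
    have h0 := (Complex.nonneg_iff.1 (hpos (ρ d x))).1
    have h1 : B (ρ d x) (ρ d x) = ((‖a‖ ^ 2 : ℝ) : ℂ) * B x x - B (ρ a x) (ρ a x) := by
      rw [hρ, hρ a, ← Module.End.mul_apply, ← map_mul, ← Module.End.mul_apply, ← map_mul, ← hd,
        map_sub, LinearMap.sub_apply, map_sub, IsScalarTower.algebraMap_apply ℝ ℂ A, AlgHom.commutes,
        Module.algebraMap_end_apply, map_smul, smul_eq_mul]
      rfl
    have e : ∀ y : E, ‖y‖ ^ 2 = (B y y).re := by
      intro y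
      rw [← hin, ← inner_self_eq_norm_sq (𝕜 := ℂ)]; rfl
    rw [e, e]
    rw [h1, Complex.sub_re, Complex.re_ofReal_mul] at h0
    linarith
  exact pre_gns ρ hρ hbd

/-- Positive `A`-kernels on a vector space `M`. -/
structure IsForm {A : Type*} [CStarAlgebra A] {M : Type*} [AddCommGroup M] [Module ℂ M]
    (k : A → M → M → ℂ) : Prop where
  add_a : ∀ a b x y, k (a + b) x y = k a x y + k b x y
  smul_a : ∀ (c : ℂ) a x y, k (c • a) x y = c * k a x y
  add_l : ∀ a x x' y, k a (x + x') y = k a x y + k a x' y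
  smul_l : ∀ a (c : ℂ) x y, k a (c • x) y = (starRingEnd ℂ) c * k a x y
  add_r : ∀ a x y y', k a x (y + y') = k a x y + k a x y'
  smul_r : ∀ a (c : ℂ) x y, k a x (c • y) = c * k a x y
  pos : ∀ S : Finset (A × M), 0 ≤ ∑ i ∈ S, ∑ j ∈ S, k (star i.1 * j.1) i.2 j.2

theorem IsForm.dilation {A : Type u} [CStarAlgebra A] {M : Type v} [AddCommGroup M] [Module ℂ M]
    {k : A → M → M → ℂ} (h : IsForm k) :
    ∃ (K : Type (max u v)) (_ : NormedAddCommGroup K) (_ : InnerProductSpace ℂ K)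
      (_ : CompleteSpace K) (π : A →⋆ₙₐ[ℂ] (K →L[ℂ] K)) (W : M →ₗ[ℂ] K),
      (∀ a x y, ⟪W x, π a (W y)⟫_ℂ = k a x y) ∧ ∀ x, π 1 (W x) = W x := by
  let B1 : A → M → (A ⊗[ℂ] M →ₗ[ℂ] ℂ) := fun a x => TensorProduct.lift
    (LinearMap.mk₂ ℂ (fun b y => k (star a * b) x y)
      (by intro b b' y; simp [mul_add, h.add_a])
      (by intro c b y; simp [h.smul_a])
      (by intro b y y'; simp [h.add_r])
      (by intro c b y; simp [h.smul_r]))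
  have hB1 : ∀ a x b y, B1 a x (b ⊗ₜ y) = k (star a * b) x y := fun a x b y => rfl
  let B : A ⊗[ℂ] M →ₗ⋆[ℂ] A ⊗[ℂ] M →ₗ[ℂ] ℂ := TensorProduct.lift
    (LinearMap.mk₂'ₛₗ (starRingEnd ℂ) (starRingEnd ℂ) B1
      (by intro a a' x; ext b y; simp [hB1, add_mul, h.add_a])
      (by intro c a x; ext b y; simp [hB1, h.smul_a])
      (by intro a x x'; ext b y; simp [hB1, h.add_l])
      (by intro c a x; ext b y; simp [hB1, h.smul_l]))
  have hB : ∀ a x b y, B (a ⊗ₜ x) (b ⊗ₜ y) = k (star a * b) x y := fun a x b y => rfl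
  have hpos : ∀ z, 0 ≤ B z z := by
    intro z
    obtain ⟨S, rfl⟩ := TensorProduct.exists_finset z
    have := h.pos S
    simp only [map_sum, LinearMap.sum_apply, hB]
    rw [Finset.sum_comm]
    exact this
  let ρ : A →ₐ[ℂ] Module.End ℂ (A ⊗[ℂ] M) := AlgHom.ofLinearMap
    ((LinearMap.rTensorHom M).comp (LinearMap.mul ℂ A))
    (by ext b y; simp)
    (by intro a a'; ext b y; simp [mul_assoc])
  have hρ1 : ∀ a b y, ρ a (b ⊗ₜ y) = (a * b) ⊗ₜ y := by
    intro a b y; simp [ρ]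
  have hρ : ∀ a x y, B (ρ a x) y = B x (ρ (star a) y) := by
    intro a x y
    induction x using TensorProduct.induction_on with
    | zero => simp
    | add x x' hx hx' => simp [hx, hx']
    | tmul b x =>
      induction y using TensorProduct.induction_on with
      | zero => simp
      | add y y' hy hy' => simp [hy, hy']
      | tmul c y => simp [hρ1, hB, mul_assoc]
  obtain ⟨K, i1, i2, i3, π, J, hJ, hπ⟩ := gns_completion B hpos ρ hρ
  refine ⟨K, i1, i2, i3, π, J.comp (TensorProduct.mk ℂ A M 1), ?_, ?_⟩
  · intro a x y
    simp [hπ, hJ, hρ1, hB]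
  · intro x
    simp [hπ, hρ1]

theorem cp_pos {A : Type u} [CStarAlgebra A]
    {H : Type v} [NormedAddCommGroup H] [InnerProductSpace ℂ H] [CompleteSpace H]
    (T : A →ₗ[ℂ] (H →L[ℂ] H)) (hT : IsCPMap T) (n : ℕ) (a : Fin n → A) (x : Fin n → H) :
    0 ≤ ∑ i, ∑ j, ⟪x i, T (star (a i) * a j) (x j)⟫_ℂ := by
  obtain ⟨z, hz⟩ := hT n _ ⟨Matrix.of (fun i j => if i.val = 0 then a j else 0), rfl⟩
  have key : ∀ i j, T (star (a i) * a j) = ∑ l, star (z l i) * z l j := by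
    intro i j
    have h1 := congrFun (congrFun hz i) j
    simp only [Matrix.map_apply, Matrix.mul_apply, Matrix.star_apply, Matrix.of_apply] at h1
    rw [← h1]
    congr 1
    have hn : 0 < n := i.pos
    rw [Finset.sum_eq_single (⟨0, hn⟩ : Fin n)]
    · simp
    · intro b _ hb
      have : b.val ≠ 0 := fun h => hb (Fin.ext h)
      simp [this]
    · simp
  have : ∑ i, ∑ j, ⟪x i, T (star (a i) * a j) (x j)⟫_ℂ
      = ∑ l, ⟪∑ i, z l i (x i), ∑ j, z l j (x j)⟫_ℂ := by
    simp only [key, ContinuousLinearMap.sum_apply, ContinuousLinearMap.mul_apply', inner_sum,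
      sum_inner, ContinuousLinearMap.star_eq_adjoint, ContinuousLinearMap.adjoint_inner_right,
      ContinuousLinearMap.comp_apply]
    simp only [ContinuousLinearMap.mul_def, ContinuousLinearMap.comp_apply,
      ContinuousLinearMap.adjoint_inner_right]
    rw [Finset.sum_congr rfl (fun i _ => Finset.sum_comm), Finset.sum_comm]
    refine Finset.sum_congr rfl fun l _ => ?_
    rw [Finset.sum_comm]
  rw [this]
  refine Finset.sum_nonneg fun l _ => ?_
  exact inner_self_nonneg_c _

theorem cp_pos_finset {A : Type u} [CStarAlgebra A]
    {H : Type v} [NormedAddCommGroup H] [InnerProductSpace ℂ H] [CompleteSpace H]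
    (T : A →ₗ[ℂ] (H →L[ℂ] H)) (hT : IsCPMap T) {ι : Type*} (S : Finset ι)
    (a : ι → A) (x : ι → H) :
    0 ≤ ∑ i ∈ S, ∑ j ∈ S, ⟪x i, T (star (a i) * a j) (x j)⟫_ℂ := by
  have h := cp_pos T hT S.card (fun i => a (S.equivFin.symm i)) (fun i => x (S.equivFin.symm i))
  rw [S.equivFin.symm.sum_comp
    (fun i => ∑ j, ⟪x i, T (star (a i) * a (S.equivFin.symm j)) (x (S.equivFin.symm j))⟫_ℂ)] at h
  rw [← Finset.sum_coe_sort]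
  refine h.trans_eq (Finset.sum_congr rfl fun i _ => ?_)
  rw [S.equivFin.symm.sum_comp (fun j => ⟪x i, T (star (a i) * a j) (x j)⟫_ℂ),
    ← Finset.sum_coe_sort S]

/-- `k` is a positive kernel with corners `T₁`, `T₂` and distance bound `c`. -/
structure Adm {A : Type u} [CStarAlgebra A]
    {H : Type v} [NormedAddCommGroup H] [InnerProductSpace ℂ H] [CompleteSpace H]
    (T₁ T₂ : A →ₗ[ℂ] (H →L[ℂ] H)) (c : ℝ) (k : A → (H × H) → (H × H) → ℂ) : Prop where
  form : IsForm k
  c1 : ∀ a x y, k a (x, 0) (y, 0) = ⟪x, T₁ a y⟫_ℂ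
  c2 : ∀ a x y, k a (0, x) (0, y) = ⟪x, T₂ a y⟫_ℂ
  bd : ∀ x, (k 1 (x, -x) (x, -x)).re ≤ c ^ 2 * ‖x‖ ^ 2

section main
variable {A : Type u} [CStarAlgebra A]
    {H : Type v} [NormedAddCommGroup H] [InnerProductSpace ℂ H] [CompleteSpace H]
    {T₁ T₂ : A →ₗ[ℂ] (H →L[ℂ] H)}

theorem adm_of_cp (hT₁ : IsCPMap T₁) (hT₂ : IsCPMap T₂) :
    ∃ c, 0 ≤ c ∧ ∃ k, Adm T₁ T₂ c k := by
  refine ⟨√(‖T₁ 1‖ + ‖T₂ 1‖), Real.sqrt_nonneg _,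
    fun a x y => ⟪x.1, T₁ a y.1⟫_ℂ + ⟪x.2, T₂ a y.2⟫_ℂ, ⟨?_, ?_, ?_, ?_, ?_, ?_, ?_⟩, ?_, ?_, ?_⟩
  · intro a b x y; simp [inner_add_right]; ring
  · intro c a x y; simp [inner_smul_right]; ring
  · intro a x x' y; simp [inner_add_left]; ring
  · intro a c x y; simp [inner_smul_left]; ring
  · intro a x y y'; simp [inner_add_right]; ring
  · intro a c x y; simp [inner_smul_right]; ring
  · intro S
    simp only [Finset.sum_add_distrib]
    exact add_nonneg (cp_pos_finset T₁ hT₁ S (fun i => i.1) (fun i => i.2.1))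
      (cp_pos_finset T₂ hT₂ S (fun i => i.1) (fun i => i.2.2))
  · intro a x y; simp
  · intro a x y; simp
  · intro x
    rw [Real.sq_sqrt (by positivity)]
    have e : ∀ T : A →ₗ[ℂ] (H →L[ℂ] H), (⟪x, T 1 x⟫_ℂ).re ≤ ‖T 1‖ * ‖x‖ ^ 2 := by
      intro T
      calc (⟪x, T 1 x⟫_ℂ).re ≤ ‖⟪x, T 1 x⟫_ℂ‖ := Complex.re_le_norm _
        _ ≤ ‖x‖ * ‖T 1 x‖ := norm_inner_le_norm _ _
        _ ≤ ‖x‖ * (‖T 1‖ * ‖x‖) := by gcongr; exact (T 1).le_opNorm x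
        _ = _ := by ring
    have h1 := e T₁
    have h2 := e T₂
    simp
    linarith

theorem adm_of_dilation {K : Type*} [NormedAddCommGroup K] [InnerProductSpace ℂ K]
    [CompleteSpace K] (π : A →⋆ₙₐ[ℂ] (K →L[ℂ] K)) (V₁ V₂ : H →L[ℂ] K)
    (h1 : IsStinespring T₁ π V₁) (h2 : IsStinespring T₂ π V₂) :
    ∃ k, Adm T₁ T₂ ‖V₁ - V₂‖ k := by
  refine ⟨fun a x y => ⟪V₁ x.1 + V₂ x.2, π a (V₁ y.1 + V₂ y.2)⟫_ℂ,
    ⟨?_, ?_, ?_, ?_, ?_, ?_, ?_⟩, ?_, ?_, ?_⟩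
  · intro a b x y; simp only [map_add, _root_.add_apply, inner_add_right]; ring
  · intro c a x y; rw [map_smul, _root_.smul_apply, inner_smul_right]
  · intro a x x' y
    simp only [Prod.fst_add, Prod.snd_add, map_add, inner_add_left]; ring
  · intro a c x y
    simp only [Prod.smul_fst, Prod.smul_snd, map_smul, ← smul_add, inner_smul_left]
  · intro a x y y'
    simp only [Prod.fst_add, Prod.snd_add, map_add, inner_add_right]; ring
  · intro a c x y
    simp only [Prod.smul_fst, Prod.smul_snd, map_smul, ← smul_add, inner_smul_right]
  · intro S
    have e : ∑ i ∈ S, ∑ j ∈ S, ⟪V₁ i.2.1 + V₂ i.2.2, π (star i.1 * j.1) (V₁ j.2.1 + V₂ j.2.2)⟫_ℂ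
        = ⟪∑ i ∈ S, π i.1 (V₁ i.2.1 + V₂ i.2.2), ∑ i ∈ S, π i.1 (V₁ i.2.1 + V₂ i.2.2)⟫_ℂ := by
      rw [sum_inner]
      refine Finset.sum_congr rfl fun i _ => ?_
      rw [inner_sum]
      refine Finset.sum_congr rfl fun j _ => ?_
      rw [map_mul, map_star, mul_apply_eq_comp, ContinuousLinearMap.star_eq_adjoint,
        ContinuousLinearMap.adjoint_inner_right]
    rw [e]
    exact inner_self_nonneg_c _
  · intro a x y
    simp [h1 a, ContinuousLinearMap.adjoint_inner_right]
  · intro a x y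
    simp [h2 a, ContinuousLinearMap.adjoint_inner_right]
  · intro x
    have e : V₁ x + V₂ (-x) = (V₁ - V₂) x := by simp [sub_eq_add_neg]
    have e2 : π 1 = adjoint (π 1) * π 1 := by
      rw [← ContinuousLinearMap.star_eq_adjoint, ← map_star, ← map_mul]; simp
    have h3 : ‖π 1 ((V₁ - V₂) x)‖ ≤ ‖V₁ - V₂‖ * ‖x‖ := by
      have hp : ‖π 1‖ ≤ 1 := by
        rcases subsingleton_or_nontrivial A with hA | hA
        · rw [Subsingleton.elim (1 : A) 0]; simp
        · exact (NonUnitalStarAlgHom.norm_apply_le π 1).trans (by simp)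
      calc _ ≤ ‖π 1‖ * ‖(V₁ - V₂) x‖ := (π 1).le_opNorm _
        _ ≤ 1 * ‖(V₁ - V₂) x‖ := by gcongr
        _ ≤ 1 * (‖V₁ - V₂‖ * ‖x‖) := by gcongr; exact (V₁ - V₂).le_opNorm x
        _ = _ := one_mul _
    simp only [e]
    rw [e2, mul_apply_eq_comp, ContinuousLinearMap.adjoint_inner_right,
      ← mul_pow]
    have := inner_self_eq_norm_sq (𝕜 := ℂ) (π 1 ((V₁ - V₂) x))
    refine this.trans_le ?_
    gcongr

theorem dilation_of_adm {c : ℝ} (hc : 0 ≤ c) {k} (h : Adm T₁ T₂ c k) :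
    ∃ (K : Type (max u v)) (_ : NormedAddCommGroup K) (_ : InnerProductSpace ℂ K)
      (_ : CompleteSpace K) (π : A →⋆ₙₐ[ℂ] (K →L[ℂ] K)) (V₁ V₂ : H →L[ℂ] K),
      IsStinespring T₁ π V₁ ∧ IsStinespring T₂ π V₂ ∧ ‖V₁ - V₂‖ ≤ c ∧
      ∀ a x y, k a x y = ⟪V₁ x.1 + V₂ x.2, π a (V₁ y.1 + V₂ y.2)⟫_ℂ := by
  obtain ⟨K, i1, i2, i3, π, W, hW, h1⟩ := h.form.dilation
  have bdd : ∀ (T : A →ₗ[ℂ] (H →L[ℂ] H)) (L : H →ₗ[ℂ] H × H),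
      (∀ a x y, k a (L x) (L y) = ⟪x, T a y⟫_ℂ) → ∀ x, ‖W (L x)‖ ≤ √‖T 1‖ * ‖x‖ := by
    intro T L hL x
    rw [← sq_le_sq₀ (by positivity) (by positivity), mul_pow, Real.sq_sqrt (by positivity)]
    have h2 := hW 1 (L x) (L x)
    rw [h1, hL] at h2
    rw [← inner_self_eq_norm_sq (𝕜 := ℂ), h2]
    calc (⟪x, T 1 x⟫_ℂ).re ≤ ‖⟪x, T 1 x⟫_ℂ‖ := Complex.re_le_norm _
        _ ≤ ‖x‖ * ‖T 1 x‖ := norm_inner_le_norm _ _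
        _ ≤ ‖x‖ * (‖T 1‖ * ‖x‖) := by gcongr; exact (T 1).le_opNorm x
        _ = _ := by ring
  let V₁ : H →L[ℂ] K := (W.comp (LinearMap.inl ℂ H H)).mkContinuous _
    (bdd T₁ (LinearMap.inl ℂ H H) h.c1)
  let V₂ : H →L[ℂ] K := (W.comp (LinearMap.inr ℂ H H)).mkContinuous _
    (bdd T₂ (LinearMap.inr ℂ H H) h.c2)
  have hV₁ : ∀ x, V₁ x = W (x, 0) := fun _ => rfl
  have hV₂ : ∀ x, V₂ x = W (0, x) := fun _ => rfl
  have hV : ∀ x : H × H, V₁ x.1 + V₂ x.2 = W x := by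
    intro x; rw [hV₁, hV₂, ← map_add]; simp
  refine ⟨K, i1, i2, i3, π, V₁, V₂, ?_, ?_, ?_, ?_⟩
  · intro a
    ext y
    refine ext_inner_left ℂ fun x => ?_
    simp [ContinuousLinearMap.adjoint_inner_right, hV₁, hW, h.c1]
  · intro a
    ext y
    refine ext_inner_left ℂ fun x => ?_
    simp [ContinuousLinearMap.adjoint_inner_right, hV₂, hW, h.c2]
  · refine ContinuousLinearMap.opNorm_le_bound _ hc fun x => ?_
    have e : (V₁ - V₂) x = W (x, -x) := by rw [← hV]; simp [sub_eq_add_neg]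
    rw [e, ← sq_le_sq₀ (by positivity) (by positivity), mul_pow]
    have h2 := hW 1 (x, -x) (x, -x)
    rw [h1] at h2
    rw [← inner_self_eq_norm_sq (𝕜 := ℂ), h2]
    exact h.bd x
  · intro a x y
    rw [hV, hV, hW]

theorem adm_bounded (a : A) (x y : H × H) :
    ∃ R : ℝ, ∀ c, 0 ≤ c → ∀ k, Adm T₁ T₂ c k → k a x y ∈ Metric.closedBall (0 : ℂ) R := by
  let N : H × H → ℝ := fun x => √(⟪x.1, T₁ 1 x.1⟫_ℂ).re + √(⟪x.2, T₂ 1 x.2⟫_ℂ).re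
  refine ⟨N x * (‖a‖ * N y), fun c hc k h => ?_⟩
  obtain ⟨K, i1, i2, i3, π, W, hW, h1⟩ := h.form.dilation
  have hn : ∀ x, ‖W x‖ = √(k 1 x x).re := by
    intro x
    have h2 := hW 1 x x
    rw [h1] at h2
    rw [← h2]
    exact norm_eq_sqrt_re_inner (𝕜 := ℂ) _
  have hN : ∀ x, ‖W x‖ ≤ N x := by
    intro x
    have : W x = W (x.1, 0) + W (0, x.2) := by rw [← map_add]; simp
    rw [this]
    refine (norm_add_le _ _).trans_eq ?_
    rw [hn, hn, h.c1, h.c2]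
  rw [mem_closedBall_zero_iff, ← hW]
  have hN0 : 0 ≤ N x := (norm_nonneg _).trans (hN x)
  calc _ ≤ ‖W x‖ * ‖π a (W y)‖ := norm_inner_le_norm _ _
    _ ≤ ‖W x‖ * (‖π a‖ * ‖W y‖) := by gcongr; exact (π a).le_opNorm _
    _ ≤ N x * (‖a‖ * N y) := by
      gcongr
      · exact hN x
      · exact NonUnitalStarAlgHom.norm_apply_le π a
      · exact hN y

theorem adm_limit {β : ℝ} {c : ℕ → ℝ} (hc0 : ∀ n, 0 ≤ c n)
    (hc : Filter.Tendsto c Filter.atTop (nhds β))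
    (k : ℕ → A → (H × H) → (H × H) → ℂ) (hk : ∀ n, Adm T₁ T₂ (c n) (k n)) :
    ∃ k', Adm T₁ T₂ β k' := by
  let U : Ultrafilter ℕ := Filter.hyperfilter ℕ
  have hU : (U : Filter ℕ) ≤ Filter.atTop := by
    rw [← Nat.cofinite_eq_atTop]; exact Filter.hyperfilter_le_cofinite
  have hlim : ∀ a x y, ∃ l, Filter.Tendsto (fun n => k n a x y) U (nhds l) := by
    intro a x y
    obtain ⟨R, hR⟩ := adm_bounded (T₁ := T₁) (T₂ := T₂) a x y
    obtain ⟨l, -, hl⟩ := (isCompact_closedBall (0 : ℂ) R).ultrafilter_le_nhds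
      (U.map (fun n => k n a x y)) (by
        rw [Filter.le_principal_iff]
        exact Filter.Eventually.of_forall (f := (U : Filter ℕ)) fun n => hR _ (hc0 n) _ (hk n))
    exact ⟨l, hl⟩
  choose l hl using hlim
  refine ⟨l, ⟨?_, ?_, ?_, ?_, ?_, ?_, ?_⟩, ?_, ?_, ?_⟩
  · intro a b x y
    refine tendsto_nhds_unique (hl _ _ _) (((hl a x y).add (hl b x y)).congr fun n => ?_)
    rw [(hk n).form.add_a]
  · intro c a x y
    refine tendsto_nhds_unique (hl _ _ _) (((hl a x y).const_mul c).congr fun n => ?_)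
    rw [(hk n).form.smul_a]
  · intro a x x' y
    refine tendsto_nhds_unique (hl _ _ _) (((hl a x y).add (hl a x' y)).congr fun n => ?_)
    rw [(hk n).form.add_l]
  · intro a c x y
    refine tendsto_nhds_unique (hl _ _ _) (((hl a x y).const_mul _).congr fun n => ?_)
    rw [(hk n).form.smul_l]
  · intro a x y y'
    refine tendsto_nhds_unique (hl _ _ _) (((hl a x y).add (hl a x y')).congr fun n => ?_)
    rw [(hk n).form.add_r]
  · intro a c x y
    refine tendsto_nhds_unique (hl _ _ _) (((hl a x y).const_mul _).congr fun n => ?_)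
    rw [(hk n).form.smul_r]
  · intro S
    exact ge_of_tendsto' (tendsto_finsetSum S fun i _ => tendsto_finsetSum S fun j _ =>
      hl (star i.1 * j.1) i.2 j.2) fun n => (hk n).form.pos S
  · intro a x y
    refine tendsto_nhds_unique (hl _ _ _) (tendsto_const_nhds.congr fun n => ?_)
    rw [(hk n).c1]
  · intro a x y
    refine tendsto_nhds_unique (hl _ _ _) (tendsto_const_nhds.congr fun n => ?_)
    rw [(hk n).c2]
  · intro x
    exact le_of_tendsto_of_tendsto' ((Complex.continuous_re.tendsto _).comp (hl 1 (x, -x) (x, -x)))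
      (((hc.mono_left hU).pow 2).mul_const _) fun n => (hk n).bd x

end main

theorem stmt2 {A : Type u} [CStarAlgebra A]
    {H : Type v} [NormedAddCommGroup H] [InnerProductSpace ℂ H] [CompleteSpace H]
    (T₁ T₂ : A →ₗ[ℂ] (H →L[ℂ] H)) (hT₁ : IsCPMap T₁) (hT₂ : IsCPMap T₂) :
    ∃ (K : Type (max u v)) (_ : NormedAddCommGroup K) (_ : InnerProductSpace ℂ K)
      (_ : CompleteSpace K) (π : A →⋆ₙₐ[ℂ] (K →L[ℂ] K)) (V₁ V₂ : H →L[ℂ] K),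
      IsStinespring T₁ π V₁ ∧ IsStinespring T₂ π V₂ ∧
      ∀ (K' : Type (max u v)) (_ : NormedAddCommGroup K') (_ : InnerProductSpace ℂ K')
        (_ : CompleteSpace K') (π' : A →⋆ₙₐ[ℂ] (K' →L[ℂ] K')) (V₁' V₂' : H →L[ℂ] K'),
        IsStinespring T₁ π' V₁' → IsStinespring T₂ π' V₂' →
        ‖V₁ - V₂‖ ≤ ‖V₁' - V₂'‖ := by
  let S : Set ℝ := {c | 0 ≤ c ∧ ∃ k, Adm T₁ T₂ c k}
  have hne : S.Nonempty := adm_of_cp hT₁ hT₂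
  have hbdd : BddBelow S := ⟨0, fun c hc => hc.1⟩
  obtain ⟨c, -, hc, hcS⟩ := exists_seq_tendsto_sInf hne hbdd
  choose hc0 k hk using hcS
  obtain ⟨k', hk'⟩ := adm_limit hc0 hc k hk
  obtain ⟨K, i1, i2, i3, π, V₁, V₂, h1, h2, h3, -⟩ :=
    dilation_of_adm (Real.sInf_nonneg fun c hc => hc.1) hk'
  refine ⟨K, i1, i2, i3, π, V₁, V₂, h1, h2, ?_⟩
  intro K' j1 j2 j3 π' V₁' V₂' h1' h2'
  exact h3.trans (csInf_le hbdd ⟨norm_nonneg _, adm_of_dilation π' V₁' V₂' h1' h2'⟩)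
end
end

section
/- Let T1, T2 : A → B(H) be completely positive maps and let T̂ : A → M_2(B(H)) be a cp extension of (T1, T2), with matrix entries T̂_ij. Then there exists a common dilation (π, V1, K), (π, V2, K) of (T1, T2) such that ‖V1 − V2‖² = ‖T1(1) + T2(1) − T̂_12(1) − T̂_21(1)‖. -/
noncomputable section

universe u v

open ContinuousLinearMap

open scoped InnerProductSpace

lemma cp_family {A : Type*} [CStarAlgebra A] {B : Type*} [Ring B] [StarRing B]
    (T : A → B) (hT : IsCPMap T) (n : ℕ) (a : Fin (n + 1) → A) :
    ∃ z : Fin (n + 1) → Fin (n + 1) → B, ∀ k l,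
      T (star (a k) * a l) = ∑ i, star (z i k) * z i l := by
  obtain ⟨z, hz⟩ := hT (n + 1) (Matrix.of fun k l => star (a k) * a l)
    ⟨Matrix.of fun i k => if i = 0 then a k else 0, by
      ext k l
      simp [Matrix.mul_apply, Matrix.star_apply]⟩
  refine ⟨fun i k => z i k, fun k l => ?_⟩
  have := congrFun (congrFun hz k) l
  simpa [Matrix.mul_apply, Matrix.star_apply] using this

lemma cp_herm {A : Type*} [CStarAlgebra A] {B : Type*} [Ring B] [StarRing B]
    (T : A → B) (hT : IsCPMap T) (a b : A) :
    star (T (star a * b)) = T (star b * a) := by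
  obtain ⟨z, hz⟩ := cp_family T hT 1 ![a, b]
  have h1 := hz 0 1
  have h2 := hz 1 0
  simp only [Matrix.cons_val_zero, Matrix.cons_val_one] at h1 h2
  rw [h1, h2]
  simp

section
variable {A : Type*} [CStarAlgebra A]
    {H : Type*} [NormedAddCommGroup H] [InnerProductSpace ℂ H] [CompleteSpace H]

/-- The kernel associated with a matrix valued map. -/
def cpKernel (T : A →ₗ[ℂ] Matrix (Fin 2) (Fin 2) (H →L[ℂ] H)) :
    Matrix (A × Fin 2) (A × Fin 2) (H →L[ℂ] H) :=
  fun p q => T (star p.1 * q.1) p.2 q.2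

lemma cp_sum_nonneg (T : A →ₗ[ℂ] Matrix (Fin 2) (Fin 2) (H →L[ℂ] H)) (hT : IsCPMap T)
    (n : ℕ) (p : Fin n → A × Fin 2) (v : Fin n → H) :
    0 ≤ (∑ k, ∑ l, ⟪cpKernel T (p l) (p k) (v k), v l⟫_ℂ).re := by
  cases n with
  | zero => simp
  | succ n =>
    obtain ⟨z, hz⟩ := cp_family T hT n (fun k => (p k).1)
    have key : ∀ k l, ⟪cpKernel T (p l) (p k) (v k), v l⟫_ℂ =
        ∑ i, ∑ g, ⟪z i k g (p k).2 (v k), z i l g (p l).2 (v l)⟫_ℂ := by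
      intro k l
      have : cpKernel T (p l) (p k) = ∑ i, ∑ g, star (z i l g (p l).2) * z i k g (p k).2 := by
        simp only [cpKernel]
        rw [hz l k, Matrix.sum_apply]
        simp [Matrix.mul_apply, Matrix.star_apply]
      rw [this]
      simp only [ContinuousLinearMap.sum_apply, sum_inner, ContinuousLinearMap.star_eq_adjoint,
        ContinuousLinearMap.mul_apply, ContinuousLinearMap.adjoint_inner_left]
    have : (∑ k, ∑ l, ⟪cpKernel T (p l) (p k) (v k), v l⟫_ℂ) =
        ∑ i, ∑ g, ⟪∑ k, z i k g (p k).2 (v k), ∑ k, z i k g (p k).2 (v k)⟫_ℂ := by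
      simp only [key, sum_inner, inner_sum]
      calc _ = ∑ k, ∑ i, ∑ l, ∑ g, ⟪z i k g (p k).2 (v k), z i l g (p l).2 (v l)⟫_ℂ :=
            Finset.sum_congr rfl fun k _ => Finset.sum_comm
        _ = ∑ i, ∑ k, ∑ l, ∑ g, ⟪z i k g (p k).2 (v k), z i l g (p l).2 (v l)⟫_ℂ :=
            Finset.sum_comm
        _ = ∑ i, ∑ k, ∑ g, ∑ l, ⟪z i k g (p k).2 (v k), z i l g (p l).2 (v l)⟫_ℂ :=
            Finset.sum_congr rfl fun i _ => Finset.sum_congr rfl fun k _ => Finset.sum_comm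
        _ = ∑ i, ∑ g, ∑ k, ∑ l, ⟪z i k g (p k).2 (v k), z i l g (p l).2 (v l)⟫_ℂ :=
            Finset.sum_congr rfl fun i _ => Finset.sum_comm
        _ = _ := by
            refine Finset.sum_congr rfl fun i _ => Finset.sum_congr rfl fun g _ => ?_
            first
            | rfl
            | exact Finset.sum_comm
    rw [this, Complex.re_sum]
    refine Finset.sum_nonneg fun i _ => ?_
    rw [Complex.re_sum]
    exact Finset.sum_nonneg fun g _ => inner_self_nonneg (𝕜 := ℂ)

open scoped ComplexOrder in
lemma cpKernel_posSemidef (T : A →ₗ[ℂ] Matrix (Fin 2) (Fin 2) (H →L[ℂ] H)) (hT : IsCPMap T) :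
    (cpKernel T).PosSemidef := by
  have tf := (RKHS.posSemidef_tfae (K := cpKernel T)).out 0 2
  rw [tf]
  refine ⟨?_, fun vv => ?_⟩
  · ext1 p q
    have := congrFun (congrFun (cp_herm T hT q.1 p.1) p.2) q.2
    simpa [Matrix.conjTranspose_apply, cpKernel, Matrix.star_apply] using this
  · have h := cp_sum_nonneg T hT vv.support.card (fun k => (vv.support.equivFin.symm k : A × Fin 2))
      (fun k => vv (vv.support.equivFin.symm k : A × Fin 2))
    have e : (vv.sum fun x w => vv.sum fun x' w' => ⟪cpKernel T x' x w, w'⟫_ℂ) =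
        ∑ k, ∑ l, ⟪cpKernel T (vv.support.equivFin.symm l : A × Fin 2)
          (vv.support.equivFin.symm k : A × Fin 2)
          (vv (vv.support.equivFin.symm k : A × Fin 2)),
          vv (vv.support.equivFin.symm l : A × Fin 2)⟫_ℂ := by
      have hs : ∀ F : A × Fin 2 → ℂ, ∑ x ∈ vv.support, F x =
          ∑ k, F (vv.support.equivFin.symm k : A × Fin 2) := by
        intro F
        rw [← Finset.sum_coe_sort]
        exact (Equiv.sum_comp vv.support.equivFin.symm (fun x => F x)).symm
      simp only [Finsupp.sum]
      rw [hs]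
      exact Finset.sum_congr rfl fun k _ => hs _
    rw [e]
    exact h

/-- Construction of the representation. -/
lemma exists_rep {K : Type*} [NormedAddCommGroup K] [InnerProductSpace ℂ K] [CompleteSpace K]
    (T : A →ₗ[ℂ] Matrix (Fin 2) (Fin 2) (H →L[ℂ] H))
    (κ : A × Fin 2 → H →L[ℂ] K)
    (hadd : ∀ a b i v, κ (a + b, i) v = κ (a, i) v + κ (b, i) v)
    (hsmul : ∀ (r : ℂ) a i v, κ (r • a, i) v = r • κ (a, i) v)
    (hk : ∀ p q v w, ⟪κ p v, κ q w⟫_ℂ = ⟪v, T (star p.1 * q.1) p.2 q.2 w⟫_ℂ)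
    (hd : (Submodule.span ℂ {x | ∃ p v, κ p v = x}).topologicalClosure = ⊤) :
    ∃ π : A →⋆ₙₐ[ℂ] (K →L[ℂ] K), ∀ c a i v, π c (κ (a, i) v) = κ (c * a, i) v := by
  let e : (A × Fin 2 →₀ H) →ₗ[ℂ] K := Finsupp.lsum ℂ (fun p => (κ p : H →ₗ[ℂ] K))
  let L : A → (A × Fin 2 →₀ H) →ₗ[ℂ] K := fun c =>
    Finsupp.lsum ℂ (fun p => (κ (c * p.1, p.2) : H →ₗ[ℂ] K))
  have he : ∀ p v, e (Finsupp.single p v) = κ p v := fun p v => by simp [e]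
  have hL : ∀ c p v, L c (Finsupp.single p v) = κ (c * p.1, p.2) v := fun c p v => by simp [L]
  have hdense : DenseRange e := by
    have : (Submodule.span ℂ {x | ∃ p v, κ p v = x}) ≤ LinearMap.range e := by
      rw [Submodule.span_le]
      rintro x ⟨p, v, rfl⟩
      exact ⟨_, he p v⟩
    have h2 : (LinearMap.range e).topologicalClosure = ⊤ :=
      top_le_iff.mp (hd ▸ Submodule.topologicalClosure_mono this)
    have := (Submodule.dense_iff_topologicalClosure_eq_top).mpr h2
    rwa [LinearMap.coe_range] at this
  have Ladd : ∀ c d, L (c + d) = L c + L d := by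
    intro c d
    ext p v
    simp [L, add_mul, hadd]
  have Lsmul : ∀ (r : ℂ) c, L (r • c) = r • L c := by
    intro r c
    ext p v
    simp [L, hsmul]
  have Lone : L 1 = e := by
    ext p v
    simp [L, e]
  have Linner : ∀ c d f g, ⟪L c f, L d g⟫_ℂ = ⟪e f, L (star c * d) g⟫_ℂ := by
    intro c d f g
    induction f using Finsupp.induction_linear with
    | zero => simp
    | add f1 f2 h1 h2 => simp [inner_add_left, h1, h2]
    | single p v =>
      induction g using Finsupp.induction_linear with
      | zero => simp
      | add f1 f2 h1 h2 => simp only [map_add, inner_add_right, h1, h2]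
      | single q w =>
        rw [hL, hL, hL, he, hk, hk]
        simp [mul_assoc]
  have hbound : ∀ c f, ‖L c f‖ ≤ ‖c‖ * ‖e f‖ := by
    intro c f
    obtain ⟨d, hd⟩ : ∃ d : A, ((‖c‖ ^ 2 : ℝ) : ℂ) • (1 : A) = star c * c + star d * d := by
      let _ : PartialOrder A := CStarAlgebra.spectralOrder A
      have _ : StarOrderedRing A := CStarAlgebra.spectralOrderedRing A
      have h : star c * c ≤ algebraMap ℝ A (‖star c * c‖) :=
        IsSelfAdjoint.le_algebraMap_norm_self (.star_mul_self c)
      rw [← sub_nonneg, CStarAlgebra.nonneg_iff_eq_star_mul_self] at h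
      obtain ⟨d, hd⟩ := h
      refine ⟨d, ?_⟩
      rw [← hd, CStarRing.norm_star_mul_self, add_sub_cancel, Algebra.algebraMap_eq_smul_one,
        sq, Complex.coe_smul]
    have h1 : ((‖c‖ ^ 2 : ℝ) : ℂ) * ⟪e f, e f⟫_ℂ = ⟪L c f, L c f⟫_ℂ + ⟪L d f, L d f⟫_ℂ := by
      rw [Linner, Linner, ← inner_add_right, ← LinearMap.add_apply, ← Ladd, ← hd, Lsmul, Lone,
        LinearMap.smul_apply, inner_smul_right]
    rw [inner_self_eq_norm_sq_to_K, inner_self_eq_norm_sq_to_K, inner_self_eq_norm_sq_to_K] at h1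
    have h2 : ‖c‖ ^ 2 * ‖e f‖ ^ 2 = ‖L c f‖ ^ 2 + ‖L d f‖ ^ 2 := by
      apply Complex.ofReal_injective
      push_cast at h1 ⊢
      exact h1
    refine (sq_le_sq₀ (norm_nonneg _) (by positivity)).mp ?_
    rw [mul_pow, h2]
    nlinarith [sq_nonneg ‖L d f‖]
  let P : A → K →L[ℂ] K := fun c => (L c).extendOfNorm e
  have hP : ∀ c f, P c (e f) = L c f := fun c f =>
    LinearMap.extendOfNorm_eq hdense ⟨‖c‖, hbound c⟩ f
  have hPk : ∀ c a i v, P c (κ (a, i) v) = κ (c * a, i) v := fun c a i v => by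
    rw [← he, hP, hL]
  have hext : ∀ S S' : K →L[ℂ] K, (∀ f, S (e f) = S' (e f)) → S = S' := by
    intro S S' h
    have := hdense.equalizer S.continuous S'.continuous (funext h)
    exact ContinuousLinearMap.ext fun x => congrFun this x
  have hext2 : ∀ S S' : K →L[ℂ] K, (∀ a i v, S (κ (a, i) v) = S' (κ (a, i) v)) → S = S' := by
    intro S S' h
    refine hext S S' fun f => ?_
    induction f using Finsupp.induction_linear with
    | zero => simp
    | add f1 f2 h1 h2 => simp only [map_add, h1, h2]
    | single p v => rw [he]; exact h p.1 p.2 v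
  refine ⟨{ toFun := P, map_smul' := ?_, map_zero' := ?_, map_add' := ?_, map_mul' := ?_,
            map_star' := ?_ }, hPk⟩
  · intro r c
    refine hext _ _ fun f => ?_
    simp [hP, Lsmul]
  · refine hext _ _ fun f => ?_
    have := Lsmul 0 0
    rw [zero_smul, zero_smul] at this
    simp [hP, this]
  · intro c d
    refine hext _ _ fun f => ?_
    simp [hP, Ladd]
  · intro c d
    refine hext2 _ _ fun a i v => ?_
    simp [hPk, mul_assoc]
  · intro c
    refine hext _ _ fun f => ?_
    rw [ContinuousLinearMap.star_eq_adjoint]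
    refine hdense.eq_of_inner_right ℂ fun g => ?_
    obtain ⟨g, rfl⟩ : ∃ g', g' = g := ⟨g, rfl⟩
    rw [hP, ContinuousLinearMap.adjoint_inner_right, hP, ← Lone, Linner, Linner]
    simp [Lone]
end

theorem stmt6 {A : Type u} [CStarAlgebra A]
    {H : Type v} [NormedAddCommGroup H] [InnerProductSpace ℂ H] [CompleteSpace H]
    (T₁ T₂ : A →ₗ[ℂ] (H →L[ℂ] H)) (hT₁ : IsCPMap T₁) (hT₂ : IsCPMap T₂)
    -- a cp extension `T̂` of `(T₁, T₂)`
    (That : A →ₗ[ℂ] Matrix (Fin 2) (Fin 2) (H →L[ℂ] H)) (hThat : IsCPMap That)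
    (h11 : ∀ a : A, That a 0 0 = T₁ a) (h22 : ∀ a : A, That a 1 1 = T₂ a) :
    ∃ (K : Type (max u v)) (_ : NormedAddCommGroup K) (_ : InnerProductSpace ℂ K)
      (_ : CompleteSpace K) (π : A →⋆ₙₐ[ℂ] (K →L[ℂ] K)) (V₁ V₂ : H →L[ℂ] K),
      IsStinespring T₁ π V₁ ∧ IsStinespring T₂ π V₂ ∧
      ‖V₁ - V₂‖ ^ 2 = ‖T₁ 1 + T₂ 1 - That 1 0 1 - That 1 1 0‖ := by
  have : Fact (cpKernel That).PosSemidef := ⟨cpKernel_posSemidef That hThat⟩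
  let K := RKHS.OfKernel (cpKernel That)
  let κ : A × Fin 2 → H →L[ℂ] K := RKHS.kerFun K
  have hker : ∀ p q, (adjoint (κ p)).comp (κ q) = cpKernel That p q := fun p q => by
    rw [← RKHS.kernel_apply, RKHS.OfKernel.kernel_ofKernel]
  have hev : ∀ p v q, (κ p v : K) q = cpKernel That q p v := fun p v q => by
    rw [RKHS.kerFun_apply, RKHS.OfKernel.kernel_ofKernel]
  obtain ⟨π, hπ⟩ := exists_rep That κ
    (fun a b i v => by
      refine RKHS.ext fun q => ?_
      rw [RKHS.coe_add, Pi.add_apply, hev, hev, hev]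
      simp [cpKernel, mul_add])
    (fun r a i v => by
      refine RKHS.ext fun q => ?_
      rw [RKHS.coe_smul, Pi.smul_apply, hev, hev]
      simp [cpKernel])
    (fun p q v w => by
      rw [← adjoint_inner_right]
      have := congrArg (fun S => S w) (hker p q)
      simp only [comp_apply] at this
      rw [this]; rfl)
    (RKHS.kerFun_dense K)
  have hS : ∀ a i j, (adjoint (κ (1, i))).comp ((π a).comp (κ (1, j))) = That a i j := by
    intro a i j
    have : (π a).comp (κ (1, j)) = κ (a, j) := by
      ext1 v
      simp [hπ]
    rw [this, hker]
    simp [cpKernel]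
  refine ⟨K, inferInstance, inferInstance, inferInstance, π, κ (1, 0), κ (1, 1), ?_, ?_, ?_⟩
  · intro a
    rw [hS, h11]
  · intro a
    rw [hS, h22]
  · rw [sq, ← norm_adjoint_comp_self]
    congr 1
    have h1 : ∀ i j, (adjoint (κ (1, i))).comp (κ (1, j)) = That 1 i j := fun i j => by
      rw [hker]
      simp [cpKernel]
    rw [map_sub, sub_comp, comp_sub, comp_sub, h1, h1, h1, h1, h11, h22]
    abel
end
end
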